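/- (Ecker–Huisken local curvature estimate, graphical form; Theorem 3.2(ii) / Theorem "localcurvethm".) Let n ≥ 1. There exists a constant C > 1, depending only on n, such that the following holds. Let ρ > 0, t₁ ∈ ℝ, t₂ ∈ (t₁,∞], x̂₀ ∈ ℝⁿ, and let f : (t₁,t₂) × Bⁿ(x̂₀,2ρ) → ℝ be a graphical mean curvature flow. Let s₁ ∈ (t₁,t₂) and s ∈ (s₁,t₂), and suppose sup_{t∈[s₁,s]} sup_{Bⁿ(x̂₀,2ρ)} |Df(t,·)| < ∞. Then for every x ∈ Bⁿ(x̂₀,ρ): |A|²(f(s,·),x) ≤ C·((s−s₁)⁻¹ + ρ⁻²) · sup_{t∈[s₁,s]} sup_{y∈Bⁿ(x̂₀,2ρ)} (1+|Df(t,y)|²)². -/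

import Mathlib

open Metric Set MeasureTheory

/-- Partial derivative `∂ᵢ g (x)`. -/
noncomputable def pd {n : ℕ} (g : EuclideanSpace ℝ (Fin n) → ℝ) (x : EuclideanSpace ℝ (Fin n))
    (i : Fin n) : ℝ :=
  fderiv ℝ g x (EuclideanSpace.single i 1)

/-- Second partial derivative `∂ᵢ∂ⱼ g (x)`. -/
noncomputable def pd2 {n : ℕ} (g : EuclideanSpace ℝ (Fin n) → ℝ) (x : EuclideanSpace ℝ (Fin n))
    (i j : Fin n) : ℝ :=
  fderiv ℝ (fun y => pd g y j) x (EuclideanSpace.single i 1)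

/-- Squared Euclidean norm `|Dg(x)|²` of the spatial gradient. -/
noncomputable def gradNormSq {n : ℕ} (g : EuclideanSpace ℝ (Fin n) → ℝ)
    (x : EuclideanSpace ℝ (Fin n)) : ℝ :=
  ∑ i, (pd g x i) ^ 2

/-- Euclidean norm `|Dg(x)|` of the spatial gradient. -/
noncomputable def gradNorm {n : ℕ} (g : EuclideanSpace ℝ (Fin n) → ℝ)
    (x : EuclideanSpace ℝ (Fin n)) : ℝ :=
  Real.sqrt (gradNormSq g x)

/-- Frobenius norm `|D²g(x)|` of the spatial Hessian. -/
noncomputable def hessNorm {n : ℕ} (g : EuclideanSpace ℝ (Fin n) → ℝ)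
    (x : EuclideanSpace ℝ (Fin n)) : ℝ :=
  Real.sqrt (∑ i, ∑ j, (pd2 g x i j) ^ 2)

/-- Right-hand side of the graphical mean curvature flow equation:
`∑ᵢⱼ (δᵢⱼ − ∂ᵢg ∂ⱼg / (1+|Dg|²)) ∂ᵢ∂ⱼ g`. -/
noncomputable def mcfRHS {n : ℕ} (g : EuclideanSpace ℝ (Fin n) → ℝ)
    (x : EuclideanSpace ℝ (Fin n)) : ℝ :=
  ∑ i, ∑ j,
    ((if i = j then (1 : ℝ) else 0) - pd g x i * pd g x j / (1 + gradNormSq g x)) * pd2 g x i j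

/-- `f` is a (smooth) graphical mean curvature flow on `I × U`. -/
def IsGMCF {n : ℕ} (I : Set ℝ) (U : Set (EuclideanSpace ℝ (Fin n)))
    (f : ℝ → EuclideanSpace ℝ (Fin n) → ℝ) : Prop :=
  ContDiffOn ℝ (⊤ : ℕ∞) (fun p : ℝ × EuclideanSpace ℝ (Fin n) => f p.1 p.2) (I ×ˢ U) ∧
  ∀ t ∈ I, ∀ x ∈ U, deriv (fun s => f s x) t = mcfRHS (f t) x

/-- Squared norm `|A|²(g,x)` of the second fundamental form of the graph of `g`
at `(x, g(x))`. -/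
noncomputable def secondFF2 {n : ℕ} (g : EuclideanSpace ℝ (Fin n) → ℝ)
    (x : EuclideanSpace ℝ (Fin n)) : ℝ :=
  ∑ i, ∑ j, ∑ k, ∑ l,
    ((if i = k then (1 : ℝ) else 0) - pd g x i * pd g x k / (1 + gradNormSq g x)) *
      ((if j = l then (1 : ℝ) else 0) - pd g x j * pd g x l / (1 + gradNormSq g x)) *
      (pd2 g x i j / Real.sqrt (1 + gradNormSq g x)) *
      (pd2 g x k l / Real.sqrt (1 + gradNormSq g x))

/-!
The proof is a maximum principle, run not for `|A|²` but for the directional curvature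
`κ(P, ξ) = D²f(ξ, ξ) / g(ξ, ξ)` on the tangent bundle of space-time, with `g` the induced metric.
With `w = 1 + |Df|² ≤ W`, `τ` the elapsed time and `σ = R² - |x - x₀|²`, consider
`Φ = τ σ² κ² / (2W - w)`. As `κ` is homogeneous of degree zero in `ξ`, the maximum is attained, and
there `ξ` is an eigenvector of `D²f` with respect to `g` with eigenvalue `κ`. This replaces the
evolution equation of `|A|²` and the Simons identity: the heat operator is applied to `log Φ` along
an orthonormal frame at the maximum point, lifted to the tangent bundle by infinitesimal parallel
transport, and all terms in the derivatives of the curvature combine with the vanishing of the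
gradient of `log Φ`. The factor `1 / (2W - w)` contributes `-2 |D²f|² / (2W - w)`, where `|D²f|²`,
measured with `g`, is at least `κ²`. Hence `2κ² / (2W - w)` is at most `1/τ` plus
cutoff terms, which gives `2Φ ≤ R⁴ + 36 n W τ R²`; the estimate follows with `R = 3ρ/2`.
-/

open scoped Matrix ContDiff Topology

/-- `HasJet2 φ a b c` says that `φ` is differentiable near `0` and twice differentiable at `0`, with
`φ 0 = a`, `φ' 0 = b` and `φ'' 0 = c`. -/
def HasJet2 (φ : ℝ → ℝ) (a b c : ℝ) : Prop :=
  φ 0 = a ∧ ∃ φ' : ℝ → ℝ, (∀ᶠ ε in 𝓝 (0 : ℝ), HasDerivAt φ (φ' ε) ε) ∧ φ' 0 = b ∧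
    HasDerivAt φ' c 0

namespace HasJet2

variable {φ ψ : ℝ → ℝ} {a b c a' b' c' : ℝ}

theorem hasDerivAt (h : HasJet2 φ a b c) : HasDerivAt φ b 0 := by
  obtain ⟨-, φ', hφ, rfl, -⟩ := h
  exact hφ.self_of_nhds

theorem congr_jet (h : HasJet2 φ a b c) (hb : b = b') (hc : c = c') : HasJet2 φ a b' c' := by
  subst hb hc
  exact h

theorem const (a : ℝ) : HasJet2 (fun _ => a) a 0 0 :=
  ⟨rfl, fun _ => 0, .of_forall fun ε => hasDerivAt_const ε a, rfl, hasDerivAt_const _ _⟩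

theorem affine (a b : ℝ) : HasJet2 (fun ε => a + ε * b) a b 0 :=
  ⟨by ring, fun _ => b, .of_forall fun ε => by
    simpa using ((hasDerivAt_id ε).mul_const b).const_add a, rfl, hasDerivAt_const _ _⟩

theorem add (h : HasJet2 φ a b c) (h' : HasJet2 ψ a' b' c') :
    HasJet2 (fun ε => φ ε + ψ ε) (a + a') (b + b') (c + c') := by
  obtain ⟨rfl, φ', hφ, rfl, hφ'⟩ := h
  obtain ⟨rfl, ψ', hψ, rfl, hψ'⟩ := h'
  refine ⟨rfl, fun ε => φ' ε + ψ' ε, ?_, rfl, hφ'.add hψ'⟩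
  filter_upwards [hφ, hψ] with ε hφε hψε using hφε.add hψε

theorem mul (h : HasJet2 φ a b c) (h' : HasJet2 ψ a' b' c') :
    HasJet2 (fun ε => φ ε * ψ ε) (a * a') (b * a' + a * b') (c * a' + 2 * (b * b') + a * c') := by
  obtain ⟨rfl, φ', hφ, rfl, hφ'⟩ := h
  obtain ⟨rfl, ψ', hψ, rfl, hψ'⟩ := h'
  refine ⟨rfl, fun ε => φ' ε * ψ ε + φ ε * ψ' ε, ?_, rfl, ?_⟩
  · filter_upwards [hφ, hψ] with ε hφε hψε using hφε.mul hψε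
  · exact ((hφ'.fun_mul hψ.self_of_nhds).fun_add (hφ.self_of_nhds.fun_mul hψ')).congr_deriv
      (by ring)

theorem const_mul (k : ℝ) (h : HasJet2 φ a b c) :
    HasJet2 (fun ε => k * φ ε) (k * a) (k * b) (k * c) :=
  ((const k).mul h).congr_jet (by ring) (by ring)

theorem sum {ι : Type*} (s : Finset ι) {φ : ι → ℝ → ℝ} {a b c : ι → ℝ}
    (h : ∀ i ∈ s, HasJet2 (φ i) (a i) (b i) (c i)) :
    HasJet2 (fun ε => ∑ i ∈ s, φ i ε) (∑ i ∈ s, a i) (∑ i ∈ s, b i) (∑ i ∈ s, c i) := by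
  classical
  induction s using Finset.induction_on with
  | empty => simpa using const 0
  | insert i s hi ih =>
    simp only [Finset.sum_insert hi]
    exact (h i (Finset.mem_insert_self _ _)).add
      (ih fun j hj => h j (Finset.mem_insert_of_mem hj))

theorem dotProduct {ι : Type*} [Fintype ι] {x x' x'' y y' y'' : ι → ℝ} {X Y : ℝ → ι → ℝ}
    (hX : ∀ i, HasJet2 (fun ε => X ε i) (x i) (x' i) (x'' i))
    (hY : ∀ i, HasJet2 (fun ε => Y ε i) (y i) (y' i) (y'' i)) :
    HasJet2 (fun ε => X ε ⬝ᵥ Y ε) (x ⬝ᵥ y) (x' ⬝ᵥ y + x ⬝ᵥ y')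
      (x'' ⬝ᵥ y + 2 * (x' ⬝ᵥ y') + x ⬝ᵥ y'') :=
  (sum Finset.univ fun i _ => (hX i).mul (hY i)).congr_jet
    (by simp only [_root_.dotProduct, Finset.sum_add_distrib])
    (by simp only [_root_.dotProduct, Finset.sum_add_distrib, Finset.mul_sum])

theorem inv (h : HasJet2 φ a b c) (ha : a ≠ 0) :
    HasJet2 (fun ε => (φ ε)⁻¹) a⁻¹ (-b / a ^ 2) (-c / a ^ 2 + 2 * b ^ 2 / a ^ 3) := by
  obtain ⟨rfl, φ', hφ, rfl, hφ'⟩ := h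
  refine ⟨rfl, fun ε => -φ' ε / φ ε ^ 2, ?_, rfl, ?_⟩
  · filter_upwards [hφ, hφ.self_of_nhds.continuousAt.eventually_ne ha] with ε hφε hne
      using hφε.fun_inv hne
  · refine (hφ'.fun_neg.fun_div (hφ.self_of_nhds.fun_pow 2) (by positivity)).congr_deriv ?_
    field_simp
    push_cast
    ring

theorem log (h : HasJet2 φ a b c) (ha : a ≠ 0) :
    HasJet2 (fun ε => Real.log (φ ε)) (Real.log a) (b / a) (c / a - (b / a) ^ 2) := by
  obtain ⟨rfl, φ', hφ, rfl, hφ'⟩ := h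
  refine ⟨rfl, fun ε => φ' ε / φ ε, ?_, rfl, ?_⟩
  · filter_upwards [hφ, hφ.self_of_nhds.continuousAt.eventually_ne ha] with ε hφε hne
      using hφε.log hne
  · exact (hφ'.fun_div hφ.self_of_nhds ha).congr_deriv (by field_simp)

theorem unique (h : HasJet2 φ a b c) (h' : HasJet2 ψ a' b' c') (he : φ =ᶠ[𝓝 0] ψ) :
    b = b' ∧ c = c' := by
  obtain ⟨-, φ', hφ, rfl, hφ'⟩ := h
  obtain ⟨-, ψ', hψ, rfl, hψ'⟩ := h'
  have hd : φ' =ᶠ[𝓝 0] ψ' := by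
    filter_upwards [hφ, hψ, he.eventually_nhds] with ε hφε hψε heε
    exact hφε.unique (hψε.congr_of_eventuallyEq heε)
  exact ⟨hd.self_of_nhds, hφ'.unique (hψ'.congr_of_eventuallyEq hd)⟩

theorem of_isLocalMax (h : HasJet2 φ a b c) (hmax : IsLocalMax φ 0) : b = 0 ∧ c ≤ 0 := by
  have hb : b = 0 := hmax.hasDerivAt_eq_zero h.hasDerivAt
  refine ⟨hb, not_lt.1 fun hc => hc.ne' ?_⟩
  -- If `c > 0` then `0` is also a local minimum, so `φ` is locally constant.
  have hmin : IsLocalMin φ 0 := by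
    obtain ⟨-, φ', hφ, hφ'0, hφ'⟩ := id h
    have hd : deriv φ =ᶠ[𝓝 0] φ' := hφ.mono fun ε hε => hε.deriv
    exact isLocalMin_of_deriv_deriv_pos (by rwa [hd.deriv_eq, hφ'.deriv])
      (by rw [hd.self_of_nhds, hφ'0, hb]) hφ.self_of_nhds.continuousAt
  have hconst : φ =ᶠ[𝓝 0] fun _ => φ 0 := by
    filter_upwards [hmax, hmin] with ε hle hge using le_antisymm hle hge
  exact (h.unique (const (φ 0)) hconst).2

end HasJet2

theorem hasDerivAt_nonneg_of_eventually_le {φ : ℝ → ℝ} {x d : ℝ} (h : HasDerivAt φ d x)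
    (hmax : ∀ᶠ y in 𝓝[<] x, φ y ≤ φ x) : 0 ≤ d := by
  have hslope := h.hasDerivWithinAt (s := Iio x)
  rw [hasDerivWithinAt_iff_tendsto_slope' (by simp)] at hslope
  refine ge_of_tendsto hslope ?_
  filter_upwards [hmax, self_mem_nhdsWithin] with y hy hyx
  rw [slope_def_field]
  exact div_nonneg_of_nonpos (sub_nonpos.2 hy) (sub_nonpos.2 (le_of_lt hyx))

/-- `HasHeatJet e z u P u' l` says that at `P` the function `u` has derivative `u' k` in the
direction `z k`, and that `l` is the value at `P` of the heat operator `∂ₑu - ∑ₖ ∂²u/∂(z k)²`. -/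
def HasHeatJet {V κ : Type*} [AddCommGroup V] [Module ℝ V] [Fintype κ] (e : V) (z : κ → V)
    (u : V → ℝ) (P : V) (u' : κ → ℝ) (l : ℝ) : Prop :=
  ∃ (d : ℝ) (c : κ → ℝ), HasDerivAt (fun ε : ℝ => u (P + ε • e)) d 0 ∧
    (∀ k, HasJet2 (fun ε => u (P + ε • z k)) (u P) (u' k) (c k)) ∧ d - ∑ k, c k = l

namespace HasHeatJet

variable {V κ : Type*} [AddCommGroup V] [Module ℝ V] [Fintype κ] {e : V} {z : κ → V} {P : V}
  {u v : V → ℝ} {u' v' : κ → ℝ} {l m : ℝ}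

theorem congr_jet {u'₁ : κ → ℝ} {l₁ : ℝ} (h : HasHeatJet e z u P u' l) (hu : ∀ k, u' k = u'₁ k)
    (hl : l = l₁) : HasHeatJet e z u P u'₁ l₁ := by
  obtain rfl := funext hu
  exact hl ▸ h

theorem const (a : ℝ) : HasHeatJet e z (fun _ => a) P 0 0 :=
  ⟨0, 0, hasDerivAt_const _ _, fun _ => .const a, by simp⟩

theorem linearMap (φ : V →ₗ[ℝ] ℝ) : HasHeatJet e z φ P (fun k => φ (z k)) (φ e) := by
  have hjet (y : V) : HasJet2 (fun ε : ℝ => φ (P + ε • y)) (φ P) (φ y) 0 := by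
    simpa using HasJet2.affine (φ P) (φ y)
  exact ⟨_, 0, (hjet e).hasDerivAt, fun k => hjet (z k), by simp⟩

theorem add (hu : HasHeatJet e z u P u' l) (hv : HasHeatJet e z v P v' m) :
    HasHeatJet e z (fun Q => u Q + v Q) P (fun k => u' k + v' k) (l + m) := by
  obtain ⟨d, c, hd, hc, rfl⟩ := hu
  obtain ⟨d', c', hd', hc', rfl⟩ := hv
  refine ⟨d + d', c + c', hd.add hd', fun k => (hc k).add (hc' k), ?_⟩
  simp only [Pi.add_apply, Finset.sum_add_distrib]
  ring

theorem mul (hu : HasHeatJet e z u P u' l) (hv : HasHeatJet e z v P v' m) :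
    HasHeatJet e z (fun Q => u Q * v Q) P (fun k => u' k * v P + u P * v' k)
      (l * v P + u P * m - 2 * ∑ k, u' k * v' k) := by
  obtain ⟨d, c, hd, hc, rfl⟩ := hu
  obtain ⟨d', c', hd', hc', rfl⟩ := hv
  refine ⟨_, _, hd.fun_mul hd', fun k => (hc k).mul (hc' k), ?_⟩
  simp only [zero_smul, add_zero, Finset.sum_add_distrib, ← Finset.sum_mul, ← Finset.mul_sum]
  ring

theorem const_mul (a : ℝ) (hu : HasHeatJet e z u P u' l) :
    HasHeatJet e z (fun Q => a * u Q) P (fun k => a * u' k) (a * l) :=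
  ((const a).mul hu).congr_jet (fun k => by simp) (by simp)

theorem sub (hu : HasHeatJet e z u P u' l) (hv : HasHeatJet e z v P v' m) :
    HasHeatJet e z (fun Q => u Q - v Q) P (fun k => u' k - v' k) (l - m) := by
  simpa only [neg_one_mul, ← sub_eq_add_neg] using hu.add (hv.const_mul (-1))

theorem sum {ι : Type*} (s : Finset ι) {u : ι → V → ℝ} {u' : ι → κ → ℝ} {l : ι → ℝ}
    (h : ∀ i ∈ s, HasHeatJet e z (u i) P (u' i) (l i)) :
    HasHeatJet e z (fun Q => ∑ i ∈ s, u i Q) P (fun k => ∑ i ∈ s, u' i k) (∑ i ∈ s, l i) := by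
  classical
  induction s using Finset.induction_on with
  | empty => simpa using! const 0
  | insert i s hi ih =>
    simp only [Finset.sum_insert hi]
    exact (h i (Finset.mem_insert_self _ _)).add
      (ih fun j hj => h j (Finset.mem_insert_of_mem hj))

theorem dotProduct {ι : Type*} [Fintype ι] {x y : V → ι → ℝ} {x' y' : κ → ι → ℝ} {lx ly : ι → ℝ}
    (hx : ∀ i, HasHeatJet e z (fun Q => x Q i) P (fun k => x' k i) (lx i))
    (hy : ∀ i, HasHeatJet e z (fun Q => y Q i) P (fun k => y' k i) (ly i)) :
    HasHeatJet e z (fun Q => x Q ⬝ᵥ y Q) P (fun k => x' k ⬝ᵥ y P + x P ⬝ᵥ y' k)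
      (lx ⬝ᵥ y P + x P ⬝ᵥ ly - 2 * ∑ k, x' k ⬝ᵥ y' k) := by
  refine (sum Finset.univ fun i _ => (hx i).mul (hy i)).congr_jet
    (fun k => Finset.sum_add_distrib) ?_
  simp only [_root_.dotProduct, Finset.sum_add_distrib, Finset.sum_sub_distrib, ← Finset.mul_sum]
  rw [Finset.sum_comm]

theorem log (hu : HasHeatJet e z u P u' l) (h0 : u P ≠ 0) :
    HasHeatJet e z (fun Q => Real.log (u Q)) P (fun k => u' k / u P)
      (l / u P + ∑ k, (u' k / u P) ^ 2) := by
  obtain ⟨d, c, hd, hc, rfl⟩ := hu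
  refine ⟨_, _, hd.log (by simpa using h0), fun k => (hc k).log h0, ?_⟩
  simp only [zero_smul, add_zero, Finset.sum_sub_distrib, ← Finset.sum_div]
  ring

theorem of_isLocalMax (hu : HasHeatJet e z u P u' l)
    (hpast : ∀ᶠ ε : ℝ in 𝓝[<] 0, u (P + ε • e) ≤ u P)
    (hmax : ∀ k, IsLocalMax (fun ε : ℝ => u (P + ε • z k)) 0) : (∀ k, u' k = 0) ∧ 0 ≤ l := by
  obtain ⟨d, c, hd, hc, rfl⟩ := hu
  refine ⟨fun k => ((hc k).of_isLocalMax (hmax k)).1, sub_nonneg.2 ?_⟩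
  exact (Finset.sum_nonpos fun k _ => ((hc k).of_isLocalMax (hmax k)).2).trans
    (hasDerivAt_nonneg_of_eventually_le hd (by simpa using hpast))

end HasHeatJet

section Frame

open Matrix

variable {ι : Type*}

/-- The metric `δᵢⱼ + pᵢ pⱼ` induced on a graph whose gradient is `p`. -/
def graphMetric [DecidableEq ι] (p : ι → ℝ) : Matrix ι ι ℝ := 1 + vecMulVec p p

theorem posDef_graphMetric [Finite ι] [DecidableEq ι] (p : ι → ℝ) : (graphMetric p).PosDef :=
  PosDef.one.add_posSemidef (posSemidef_vecMulVec_self_star p)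

theorem isSymm_graphMetric [DecidableEq ι] (p : ι → ℝ) : (graphMetric p).IsSymm :=
  isSymm_one.add (transpose_vecMulVec p p)

variable [Fintype ι]

theorem dotProduct_mulVec_comm_of_isSymm {S : Matrix ι ι ℝ} (hS : S.IsSymm) (x y : ι → ℝ) :
    x ⬝ᵥ S *ᵥ y = y ⬝ᵥ S *ᵥ x := by
  rw [dotProduct_mulVec, ← mulVec_transpose, hS.eq, dotProduct_comm]

theorem mul_mul_transpose_apply (B S : Matrix ι ι ℝ) (k l : ι) :
    (B * S * Bᵀ) k l = B k ⬝ᵥ S *ᵥ B l := by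
  rw [Matrix.mul_assoc]
  simp [mul_apply, dotProduct, mulVec]

theorem mulVec_eq_smul_mulVec_of_abs_le {S G : Matrix ι ι ℝ} (hS : S.IsSymm) (hG : G.IsSymm)
    {ξ : ι → ℝ} {μ : ℝ} (hξ : ξ ⬝ᵥ S *ᵥ ξ = μ * (ξ ⬝ᵥ G *ᵥ ξ))
    (h : ∀ y, |y ⬝ᵥ S *ᵥ y| ≤ |μ| * (y ⬝ᵥ G *ᵥ y)) : S *ᵥ ξ = μ • G *ᵥ ξ := by
  wlog hμ : 0 ≤ μ generalizing S μ
  · have := this (S := -S) (μ := -μ) hS.neg (by simp [neg_mulVec, hξ])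
      (by simpa [neg_mulVec] using h) (by linarith)
    simpa [neg_mulVec] using this
  have hpsd : (μ • G - S).PosSemidef := by
    refine .of_dotProduct_mulVec_nonneg ((hG.smul μ).sub hS) fun y => ?_
    have := (le_abs_self _).trans (h y)
    rw [abs_of_nonneg hμ] at this
    simpa [sub_mulVec, smul_mulVec] using this
  have hker := (hpsd.dotProduct_mulVec_zero_iff ξ).1 (by simp [sub_mulVec, smul_mulVec, hξ])
  rw [sub_mulVec, smul_mulVec, sub_eq_zero] at hker
  exact hker.symm

theorem abs_dotProduct_mulVec_le {S G : Matrix ι ι ℝ} (hS : S.IsSymm) (hG : G.IsSymm) {Λ : ℝ}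
    (h : ∀ y, |y ⬝ᵥ S *ᵥ y| ≤ Λ * (y ⬝ᵥ G *ᵥ y)) (x y : ι → ℝ) :
    |x ⬝ᵥ S *ᵥ y| ≤ Λ / 2 * (x ⬝ᵥ G *ᵥ x + y ⬝ᵥ G *ᵥ y) := by
  have hadd := h (x + y)
  have hsub := h (x - y)
  have hSxy := dotProduct_mulVec_comm_of_isSymm hS y x
  have hGxy := dotProduct_mulVec_comm_of_isSymm hG y x
  simp only [mulVec_add, mulVec_sub, dotProduct_add, add_dotProduct, dotProduct_sub,
    sub_dotProduct, abs_le, hSxy, hGxy] at hadd hsub ⊢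
  constructor <;> linarith

theorem sq_eigenvalue_le_sum_sq {A : Matrix ι ι ℝ} {u : ι → ℝ} {μ : ℝ} (h : A *ᵥ u = μ • u)
    (hu : u ≠ 0) : μ ^ 2 ≤ ∑ k, ∑ l, A k l ^ 2 := by
  have hpos : 0 < ∑ i, u i ^ 2 := by
    simpa [dotProduct, sq] using dotProduct_self_star_pos_iff.2 hu
  refine le_of_mul_le_mul_right ?_ hpos
  calc μ ^ 2 * ∑ i, u i ^ 2 = ∑ k, (∑ l, A k l * u l) ^ 2 := by
        have hk (k : ι) : ∑ l, A k l * u l = μ * u k := congrFun h k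
        simp only [hk, mul_pow, Finset.mul_sum]
    _ ≤ ∑ k, (∑ l, A k l ^ 2) * ∑ l, u l ^ 2 :=
        Finset.sum_le_sum fun k _ => Finset.sum_mul_sq_le_sq_mul_sq _ _ _
    _ = (∑ k, ∑ l, A k l ^ 2) * ∑ i, u i ^ 2 := Finset.sum_mul .. |>.symm

/-- The square `1 + |p|²` of the area element of a graph whose gradient is `p`. -/
def areaSq (p : ι → ℝ) : ℝ := 1 + p ⬝ᵥ p

theorem one_le_areaSq (p : ι → ℝ) : 1 ≤ areaSq p :=
  le_add_of_nonneg_right (dotProduct_self_star_nonneg p)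

theorem areaSq_pos (p : ι → ℝ) : 0 < areaSq p := one_pos.trans_le (one_le_areaSq p)

variable [DecidableEq ι] {p : ι → ℝ} {B : Matrix ι ι ℝ}

theorem dotProduct_graphMetric_mulVec (p x y : ι → ℝ) :
    x ⬝ᵥ graphMetric p *ᵥ y = x ⬝ᵥ y + (p ⬝ᵥ x) * (p ⬝ᵥ y) := by
  simp [graphMetric, add_mulVec, vecMulVec_mulVec, dotProduct_comm x p, mul_comm]

theorem inv_graphMetric (p : ι → ℝ) :
    (graphMetric p)⁻¹ = 1 - (areaSq p)⁻¹ • vecMulVec p p := by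
  refine inv_eq_right_inv ?_
  have hw := (areaSq_pos p).ne'
  have hpp : vecMulVec p p * vecMulVec p p = (areaSq p - 1) • vecMulVec p p := by
    simp [areaSq, vecMulVec_mul_vecMulVec]
  rw [graphMetric, mul_sub, mul_one, mul_smul_comm, add_mul, one_mul, hpp, sub_smul, one_smul,
    add_sub_cancel, inv_smul_smul₀ hw, add_sub_cancel_right]

theorem dotProduct_graphMetric_mulVec_self (p x : ι → ℝ) :
    p ⬝ᵥ graphMetric p *ᵥ x = areaSq p * (p ⬝ᵥ x) := by
  rw [dotProduct_graphMetric_mulVec, areaSq]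
  ring

theorem graphMetric_mulVec (p x : ι → ℝ) : graphMetric p *ᵥ x = x + (p ⬝ᵥ x) • p := by
  simp [graphMetric, add_mulVec, vecMulVec_mulVec]

/-- The rows of `B` are an orthonormal basis for the metric induced on a graph with gradient `p`. -/
def IsTangentFrame (p : ι → ℝ) (B : Matrix ι ι ℝ) : Prop :=
  B * graphMetric p * Bᵀ = 1

theorem exists_isTangentFrame (p : ι → ℝ) : ∃ B, IsTangentFrame p B := by
  open scoped MatrixOrder in
  obtain ⟨B, hB⟩ := CStarAlgebra.nonneg_iff_eq_star_mul_self.1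
    (posDef_graphMetric p).inv.posSemidef.nonneg
  refine ⟨B, ?_⟩
  have hunit : IsUnit (graphMetric p).det := (posDef_graphMetric p).det_pos.ne'.isUnit
  rw [IsTangentFrame, mul_eq_one_comm, ← mul_assoc]
  have : Bᵀ * B = (graphMetric p)⁻¹ := hB.symm
  rw [this, nonsing_inv_mul _ hunit]

namespace IsTangentFrame

theorem dotProduct_graphMetric (hB : IsTangentFrame p B) (k l : ι) :
    B k ⬝ᵥ graphMetric p *ᵥ B l = (1 : Matrix ι ι ℝ) k l := by
  rw [← hB, mul_mul_transpose_apply]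

theorem dotProduct_self (hB : IsTangentFrame p B) (k : ι) :
    B k ⬝ᵥ B k + (p ⬝ᵥ B k) ^ 2 = 1 := by
  simpa [dotProduct_graphMetric_mulVec, sq] using hB.dotProduct_graphMetric k k

theorem transpose_mul_self (hB : IsTangentFrame p B) :
    Bᵀ * B = (graphMetric p)⁻¹ := by
  refine (inv_eq_right_inv ?_).symm
  rw [← mul_assoc, mul_eq_one_comm, ← mul_assoc]
  exact hB

theorem sum_dotProduct_mul_dotProduct (hB : IsTangentFrame p B) (x y : ι → ℝ) :
    ∑ k, (x ⬝ᵥ B k) * (y ⬝ᵥ B k) = x ⬝ᵥ y - (p ⬝ᵥ x) * (p ⬝ᵥ y) / areaSq p := by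
  calc ∑ k, (x ⬝ᵥ B k) * (y ⬝ᵥ B k) = B *ᵥ x ⬝ᵥ B *ᵥ y := by
        simp only [dotProduct_comm x, dotProduct_comm y]; rfl
    _ = x ⬝ᵥ (Bᵀ * B) *ᵥ y := by
        rw [← mulVec_mulVec, dotProduct_mulVec x, vecMul_transpose]
    _ = x ⬝ᵥ y - (p ⬝ᵥ x) * (p ⬝ᵥ y) / areaSq p := by
        rw [hB.transpose_mul_self, inv_graphMetric, sub_mulVec, smul_mulVec, vecMulVec_mulVec]
        simp [dotProduct_sub, dotProduct_comm x p]
        ring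

theorem sum_sq_graphMetric_mulVec_dotProduct (hB : IsTangentFrame p B) (x : ι → ℝ) :
    ∑ k, (graphMetric p *ᵥ x ⬝ᵥ B k) ^ 2 = x ⬝ᵥ graphMetric p *ᵥ x := by
  simp only [sq, hB.sum_dotProduct_mul_dotProduct, dotProduct_graphMetric_mulVec_self]
  nth_rw 1 [graphMetric_mulVec]
  rw [add_dotProduct, smul_dotProduct, dotProduct_graphMetric_mulVec_self, smul_eq_mul,
    mul_mul_mul_comm, mul_assoc (areaSq p), mul_div_cancel_left₀ _ (areaSq_pos p).ne']
  ring

theorem sum_dotProduct_mulVec (hB : IsTangentFrame p B) (M : Matrix ι ι ℝ) :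
    ∑ k, B k ⬝ᵥ M *ᵥ B k = M.trace - (p ⬝ᵥ M *ᵥ p) / areaSq p := by
  calc ∑ k, B k ⬝ᵥ M *ᵥ B k = (B * (M * Bᵀ)).trace := by
        simp [trace, mul_apply, dotProduct, mulVec]
    _ = (M * (graphMetric p)⁻¹).trace := by
        rw [trace_mul_comm, mul_assoc, hB.transpose_mul_self]
    _ = M.trace - (p ⬝ᵥ M *ᵥ p) / areaSq p := by
        rw [inv_graphMetric, mul_sub, mul_one, mul_smul_comm, trace_sub, trace_smul,
          mul_vecMulVec, trace_vecMulVec, dotProduct_comm, smul_eq_mul]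
        ring

end IsTangentFrame

theorem IsTangentFrame.sq_eigenvalue_le {S : Matrix ι ι ℝ} {ξ : ι → ℝ} {μ : ℝ}
    (hB : IsTangentFrame p B) (h : S *ᵥ ξ = μ • graphMetric p *ᵥ ξ) (hξ : ξ ≠ 0) :
    μ ^ 2 ≤ ∑ k, ∑ l, (B k ⬝ᵥ S *ᵥ B l) ^ 2 := by
  -- In the frame, `S` has the matrix `B S Bᵀ` and `ξ` has the coordinates `u`.
  set u := (B * graphMetric p) *ᵥ ξ with hu
  have hξu : Bᵀ *ᵥ u = ξ := by
    rw [hu, mulVec_mulVec, mul_eq_one_comm.1 hB, one_mulVec]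
  simp only [← mul_mul_transpose_apply]
  refine sq_eigenvalue_le_sum_sq (u := u) ?_ fun h0 => hξ (by rw [← hξu, h0, mulVec_zero])
  rw [← mulVec_mulVec, hξu, ← mulVec_mulVec, h, mulVec_smul, mulVec_mulVec]

theorem IsTangentFrame.sum_inv_graphMetric (hB : IsTangentFrame p B) (S : Matrix ι ι ℝ) :
    ∑ i, ∑ j, ∑ k, ∑ l, (graphMetric p)⁻¹ i k * (graphMetric p)⁻¹ j l * S i j * S k l =
      ∑ k, ∑ l, (B k ⬝ᵥ S *ᵥ B l) ^ 2 := by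
  have hsymm : (Bᵀ * B)ᵀ = Bᵀ * B := by simp
  calc ∑ i, ∑ j, ∑ k, ∑ l, (graphMetric p)⁻¹ i k * (graphMetric p)⁻¹ j l * S i j * S k l
      = (S * (Bᵀ * B * S * (Bᵀ * B)ᵀ)ᵀ).trace := by
        simp only [← hB.transpose_mul_self, trace, diag_apply, mul_apply (M := S),
          transpose_apply (Bᵀ * B * S * (Bᵀ * B)ᵀ), mul_apply (N := (Bᵀ * B)ᵀ),
          transpose_apply (Bᵀ * B), mul_apply (M := Bᵀ * B), Finset.mul_sum, Finset.sum_mul]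
        refine Finset.sum_congr rfl fun i _ => Finset.sum_congr rfl fun j _ => ?_
        rw [Finset.sum_comm]
        exact Finset.sum_congr rfl fun l _ => Finset.sum_congr rfl fun k _ => by ring
    _ = (B * S * Bᵀ * (B * S * Bᵀ)ᵀ).trace := by
        rw [hsymm]
        simp only [transpose_mul, transpose_transpose, ← mul_assoc]
        rw [trace_mul_comm]
        simp only [← mul_assoc]
    _ = ∑ k, ∑ l, (B k ⬝ᵥ S *ᵥ B l) ^ 2 := by
        simp only [trace, diag_apply, mul_apply (M := B * S * Bᵀ), transpose_apply,
          mul_mul_transpose_apply, sq]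

end Frame

section DirDeriv

variable {V : Type*} [NormedAddCommGroup V] [NormedSpace ℝ V] {G G' : V → ℝ} {P : V}

/-- The derivative of `G` in the constant direction `z`, as a function on `V`. -/
noncomputable def dirDeriv (z : V) (G : V → ℝ) : V → ℝ := fun P => fderiv ℝ G P z

theorem contDiffAt_dirDeriv (hG : ContDiffAt ℝ ∞ G P) (z : V) : ContDiffAt ℝ ∞ (dirDeriv z G) P :=
  (hG.fderiv_right (m := ∞) (by simp)).clm_apply contDiffAt_const

theorem dirDeriv_congr (h : G =ᶠ[𝓝 P] G') (z : V) : dirDeriv z G =ᶠ[𝓝 P] dirDeriv z G' := by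
  filter_upwards [h.eventually_nhds] with Q hQ
  rw [dirDeriv, dirDeriv, Filter.EventuallyEq.fderiv_eq hQ]

theorem dirDeriv_comm (hG : ContDiffAt ℝ ∞ G P) (y z : V) :
    dirDeriv y (dirDeriv z G) =ᶠ[𝓝 P] dirDeriv z (dirDeriv y G) := by
  have h2 : ContDiffAt ℝ 2 G P := hG.of_le (WithTop.coe_le_coe.2 le_top)
  filter_upwards [h2.eventually (by simp)] with Q hQ
  have hd : DifferentiableAt ℝ (fderiv ℝ G) Q :=
    (hQ.fderiv_right (m := 1) (by norm_num)).differentiableAt one_ne_zero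
  have hsnd (a b : V) : dirDeriv a (dirDeriv b G) Q = fderiv ℝ (fderiv ℝ G) Q a b := by
    change fderiv ℝ (fun R => fderiv ℝ G R b) Q a = _
    rw [fderiv_clm_apply hd (differentiableAt_const _)]
    simp
  rw [hsnd, hsnd, (hQ.isSymmSndFDerivAt (by simp)).eq]

theorem dirDeriv_comm₃ (hG : ContDiffAt ℝ ∞ G P) (x y z : V) :
    dirDeriv z (dirDeriv x (dirDeriv y G)) =ᶠ[𝓝 P] dirDeriv x (dirDeriv y (dirDeriv z G)) :=
  (dirDeriv_comm (contDiffAt_dirDeriv hG y) z x).trans (dirDeriv_congr (dirDeriv_comm hG z y) x)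

theorem hasDerivAt_line {ε : ℝ} {z : V} (hG : DifferentiableAt ℝ G (P + ε • z)) :
    HasDerivAt (fun δ : ℝ => G (P + δ • z)) (dirDeriv z G (P + ε • z)) ε := by
  have hline : HasDerivAt (fun δ : ℝ => P + δ • z) z ε := by
    simpa using ((hasDerivAt_id ε).smul_const z).const_add P
  exact hG.hasFDerivAt.comp_hasDerivAt ε hline

theorem tendsto_line (P z : V) : Filter.Tendsto (fun ε : ℝ => P + ε • z) (𝓝 0) (𝓝 P) :=
  Continuous.tendsto' (by fun_prop) _ _ (by simp)

theorem hasJet2_line (hG : ContDiffAt ℝ ∞ G P) (z : V) :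
    HasJet2 (fun ε : ℝ => G (P + ε • z)) (G P) (dirDeriv z G P)
      (dirDeriv z (dirDeriv z G) P) := by
  refine ⟨by simp, fun ε => dirDeriv z G (P + ε • z), ?_, by simp, ?_⟩
  · have h1 : ContDiffAt ℝ 1 G P := hG.of_le (by exact_mod_cast le_top)
    filter_upwards [(tendsto_line P z).eventually (h1.eventually (by simp))] with ε hε
    exact hasDerivAt_line (hε.differentiableAt one_ne_zero)
  · have h := (contDiffAt_dirDeriv hG z).differentiableAt (by simp)
    simpa using hasDerivAt_line (P := P) (ε := 0) (z := z) (by simpa using h)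

variable {κ : Type*} [Fintype κ]

/-- The heat operator `∂ₑ - ∑ₖ ∂²/∂(z k)²` with constant coefficients. -/
noncomputable def heatOp (e : V) (z : κ → V) (G : V → ℝ) : V → ℝ :=
  fun P => dirDeriv e G P - ∑ k, dirDeriv (z k) (dirDeriv (z k) G) P

theorem contDiffAt_heatOp (hG : ContDiffAt ℝ ∞ G P) (e : V) (z : κ → V) :
    ContDiffAt ℝ ∞ (heatOp e z G) P :=
  (contDiffAt_dirDeriv hG e).sub
    (ContDiffAt.sum fun k _ => contDiffAt_dirDeriv (contDiffAt_dirDeriv hG (z k)) (z k))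

theorem dirDeriv_heatOp (hG : ContDiffAt ℝ ∞ G P) (e y : V) (z : κ → V) :
    dirDeriv y (heatOp e z G) =ᶠ[𝓝 P] heatOp e z (dirDeriv y G) := by
  have hdiff : ∀ᶠ Q in 𝓝 P, DifferentiableAt ℝ (dirDeriv e G) Q ∧
      ∀ k, DifferentiableAt ℝ (dirDeriv (z k) (dirDeriv (z k) G)) Q := by
    have h1 {H : V → ℝ} (hH : ContDiffAt ℝ ∞ H P) : ∀ᶠ Q in 𝓝 P, DifferentiableAt ℝ H Q :=
      ((hH.of_le (m := 1) (by exact_mod_cast le_top)).eventually (by simp)).mono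
        fun Q hQ => hQ.differentiableAt one_ne_zero
    exact (h1 (contDiffAt_dirDeriv hG e)).and (Filter.eventually_all.2 fun k =>
      h1 (contDiffAt_dirDeriv (contDiffAt_dirDeriv hG (z k)) (z k)))
  have hcomm : ∀ᶠ Q in 𝓝 P, ∀ k, dirDeriv y (dirDeriv (z k) (dirDeriv (z k) G)) Q =
      dirDeriv (z k) (dirDeriv (z k) (dirDeriv y G)) Q :=
    Filter.eventually_all.2 fun k => dirDeriv_comm₃ hG (z k) (z k) y
  filter_upwards [hdiff, hcomm, dirDeriv_comm hG y e] with Q hQ hQz hQe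
  rw [heatOp, ← hQe, ← Finset.sum_congr rfl fun k _ => hQz k]
  change fderiv ℝ (fun R => dirDeriv e G R - ∑ k, dirDeriv (z k) (dirDeriv (z k) G) R) Q y = _
  rw [fderiv_fun_sub hQ.1 (DifferentiableAt.fun_sum fun k _ => hQ.2 k),
    fderiv_fun_sum fun k _ => hQ.2 k]
  simp [dirDeriv]

theorem hasHeatJet_comp_fst {W : Type*} [AddCommGroup W] [Module ℝ W] {X : V × W}
    (hG : ContDiffAt ℝ ∞ G X.1) (e : V × W) (z : κ → V × W) :
    HasHeatJet e z (fun Y => G Y.1) X (fun k => dirDeriv (z k).1 G X.1)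
      (heatOp e.1 (fun k => (z k).1) G X.1) :=
  ⟨_, _, (hasJet2_line hG e.1).hasDerivAt, fun k => hasJet2_line hG (z k).1, rfl⟩

end DirDeriv

section Spatial

open Matrix

variable {ι : Type*} [Fintype ι]

/-- The vector `x` as a direction in space-time. -/
noncomputable def spatial : (ι → ℝ) →ₗ[ℝ] ℝ × EuclideanSpace ℝ ι :=
  LinearMap.inr ℝ ℝ (EuclideanSpace ℝ ι) ∘ₗ (WithLp.linearEquiv 2 ℝ (ι → ℝ)).symm.toLinearMap

/-- The direction of time in space-time. -/
noncomputable def timeDir : ℝ × EuclideanSpace ℝ ι := (1, 0)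

variable [DecidableEq ι]

/-- The spatial gradient of a function on space-time. -/
noncomputable def spatialGrad (G : ℝ × EuclideanSpace ℝ ι → ℝ) (P : ℝ × EuclideanSpace ℝ ι) :
    ι → ℝ :=
  fun i => dirDeriv (spatial (Pi.single i 1)) G P

/-- The spatial Hessian of a function on space-time. -/
noncomputable def spatialHess (G : ℝ × EuclideanSpace ℝ ι → ℝ) (P : ℝ × EuclideanSpace ℝ ι) :
    Matrix ι ι ℝ :=
  .of fun i j => dirDeriv (spatial (Pi.single i 1)) (dirDeriv (spatial (Pi.single j 1)) G) P

variable {G : ℝ × EuclideanSpace ℝ ι → ℝ} {P : ℝ × EuclideanSpace ℝ ι}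

theorem dirDeriv_spatial (x : ι → ℝ) (G : ℝ × EuclideanSpace ℝ ι → ℝ)
    (P : ℝ × EuclideanSpace ℝ ι) : dirDeriv (spatial x) G P = spatialGrad G P ⬝ᵥ x := by
  conv_lhs => rw [pi_eq_sum_univ' x]
  simp [dirDeriv, spatialGrad, dotProduct, mul_comm]

theorem isSymm_spatialHess (hG : ContDiffAt ℝ ∞ G P) : (spatialHess G P).IsSymm :=
  Matrix.ext fun _ _ => (dirDeriv_comm hG _ _).self_of_nhds

theorem eventually_spatialHess_mulVec (hG : ContDiffAt ℝ ∞ G P) (x : ι → ℝ) :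
    ∀ᶠ Q in 𝓝 P, spatialHess G Q *ᵥ x = spatialGrad (dirDeriv (spatial x) G) Q := by
  have hcomm (y z : ι → ℝ) := dirDeriv_comm hG (spatial y) (spatial z)
  filter_upwards [Filter.eventually_all.2 fun i => hcomm (Pi.single i 1) x,
    Filter.eventually_all.2 fun i => Filter.eventually_all.2 fun j =>
      hcomm (Pi.single i 1) (Pi.single j 1)] with Q hQx hQ
  ext i
  rw [spatialGrad, hQx, dirDeriv_spatial]
  exact congrArg (· ⬝ᵥ x) (funext fun j => hQ i j)

theorem spatialHess_mulVec (hG : ContDiffAt ℝ ∞ G P) (x : ι → ℝ) :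
    spatialHess G P *ᵥ x = spatialGrad (dirDeriv (spatial x) G) P :=
  (eventually_spatialHess_mulVec hG x).self_of_nhds

theorem dotProduct_spatialHess_mulVec (hG : ContDiffAt ℝ ∞ G P) (x y : ι → ℝ) :
    x ⬝ᵥ spatialHess G P *ᵥ y = dirDeriv (spatial x) (dirDeriv (spatial y) G) P := by
  rw [spatialHess_mulVec hG, dirDeriv_spatial, dotProduct_comm]

theorem spatialHess_dirDeriv_mulVec (hG : ContDiffAt ℝ ∞ G P) (x y : ι → ℝ) :
    spatialHess (dirDeriv (spatial x) G) P *ᵥ y = spatialHess (dirDeriv (spatial y) G) P *ᵥ x := by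
  rw [spatialHess_mulVec (contDiffAt_dirDeriv hG _), spatialHess_mulVec (contDiffAt_dirDeriv hG _)]
  exact funext fun i => (dirDeriv_congr (dirDeriv_comm hG _ _) _).self_of_nhds

theorem hasJet2_spatialGrad (hG : ContDiffAt ℝ ∞ G P) (z : ℝ × EuclideanSpace ℝ ι) (i : ι) :
    HasJet2 (fun ε : ℝ => spatialGrad G (P + ε • z) i) (spatialGrad G P i)
      (spatialGrad (dirDeriv z G) P i) (spatialGrad (dirDeriv z (dirDeriv z G)) P i) :=
  (hasJet2_line (contDiffAt_dirDeriv hG _) z).congr_jet (dirDeriv_comm hG _ _).self_of_nhds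
    ((dirDeriv_congr (dirDeriv_comm hG _ _) _).trans
      (dirDeriv_comm (contDiffAt_dirDeriv hG _) _ _)).self_of_nhds

theorem hasJet2_spatialHess (hG : ContDiffAt ℝ ∞ G P) (z : ℝ × EuclideanSpace ℝ ι) (i j : ι) :
    HasJet2 (fun ε : ℝ => spatialHess G (P + ε • z) i j) (spatialHess G P i j)
      (spatialHess (dirDeriv z G) P i j) (spatialHess (dirDeriv z (dirDeriv z G)) P i j) :=
  (hasJet2_line (contDiffAt_dirDeriv (contDiffAt_dirDeriv hG _) _) z).congr_jet
    (dirDeriv_comm₃ hG _ _ _).self_of_nhds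
    ((dirDeriv_congr (dirDeriv_comm₃ hG _ _ _) _).trans
      (dirDeriv_comm₃ (contDiffAt_dirDeriv hG z) _ _ _)).self_of_nhds

end Spatial

section Flow

open Matrix

variable {ι : Type*} [Fintype ι]

theorem HasJet2.dotProduct_mulVec {p q v : ι → ℝ} {S T U : Matrix ι ι ℝ} {X : ℝ → ι → ℝ}
    {M : ℝ → Matrix ι ι ℝ} (hX : ∀ i, HasJet2 (fun ε => X ε i) (p i) (q i) (v i))
    (hM : ∀ i j, HasJet2 (fun ε => M ε i j) (S i j) (T i j) (U i j))
    (hS : S.IsSymm) (hT : T.IsSymm) :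
    HasJet2 (fun ε => X ε ⬝ᵥ M ε *ᵥ X ε) (p ⬝ᵥ S *ᵥ p) (2 * (q ⬝ᵥ S *ᵥ p) + p ⬝ᵥ T *ᵥ p)
      (2 * (v ⬝ᵥ S *ᵥ p) + 2 * (q ⬝ᵥ S *ᵥ q) + 4 * (q ⬝ᵥ T *ᵥ p) + p ⬝ᵥ U *ᵥ p) := by
  have hMX (i : ι) : HasJet2 (fun ε => (M ε *ᵥ X ε) i) ((S *ᵥ p) i) ((T *ᵥ p + S *ᵥ q) i)
      ((U *ᵥ p + (2 : ℝ) • T *ᵥ q + S *ᵥ v) i) := HasJet2.dotProduct (hM i) hX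
  refine (HasJet2.dotProduct hX hMX).congr_jet ?_ ?_ <;>
  · simp only [dotProduct_add, dotProduct_smul, smul_eq_mul,
      dotProduct_mulVec_comm_of_isSymm hS p, dotProduct_mulVec_comm_of_isSymm hT p]
    ring

theorem HasJet2.areaSq {p q v : ι → ℝ} {X : ℝ → ι → ℝ}
    (hX : ∀ i, HasJet2 (fun ε => X ε i) (p i) (q i) (v i)) :
    HasJet2 (fun ε => areaSq (X ε)) (areaSq p) (2 * (p ⬝ᵥ q)) (2 * (p ⬝ᵥ v) + 2 * (q ⬝ᵥ q)) :=
  ((HasJet2.const 1).add (HasJet2.dotProduct hX hX)).congr_jet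
    (by rw [dotProduct_comm q]; ring) (by rw [dotProduct_comm v]; ring)

/-- The right-hand side of the graphical mean curvature flow equation, as a function of the
gradient `p` and the Hessian `S`. -/
noncomputable def mcfOperator (p : ι → ℝ) (S : Matrix ι ι ℝ) : ℝ :=
  S.trace - (p ⬝ᵥ S *ᵥ p) / areaSq p

variable [DecidableEq ι]

theorem IsTangentFrame.hasJet2_mcfOperator_sub {p q v : ι → ℝ} {S T U B : Matrix ι ι ℝ}
    {X : ℝ → ι → ℝ} {M : ℝ → Matrix ι ι ℝ} (hB : IsTangentFrame p B)
    (hX : ∀ i, HasJet2 (fun ε => X ε i) (p i) (q i) (v i))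
    (hM : ∀ i j, HasJet2 (fun ε => M ε i j) (S i j) (T i j) (U i j))
    (hS : S.IsSymm) (hT : T.IsSymm) {q' : ι → ℝ} (hq' : q' = q - (p ⬝ᵥ q / areaSq p) • p) :
    HasJet2 (fun ε => mcfOperator (X ε) (M ε) - ∑ k, B k ⬝ᵥ M ε *ᵥ B k) 0
      (-(2 / areaSq p) * ∑ k, (S *ᵥ p ⬝ᵥ B k) * (q ⬝ᵥ B k))
      (-(2 / areaSq p) * (∑ k, (S *ᵥ p ⬝ᵥ B k) * (v ⬝ᵥ B k) + q' ⬝ᵥ S *ᵥ q')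
        - 4 / areaSq p * ∑ k, (T *ᵥ p ⬝ᵥ B k) * (q ⬝ᵥ B k)
        + 4 * (p ⬝ᵥ q) / areaSq p ^ 2 * ∑ k, (S *ᵥ p ⬝ᵥ B k) * (q ⬝ᵥ B k)
        + 2 * (p ⬝ᵥ S *ᵥ p) / areaSq p ^ 2 * ∑ k, (q ⬝ᵥ B k) ^ 2) := by
  have hw := (areaSq_pos p).ne'
  have hfun : (fun ε => mcfOperator (X ε) (M ε) - ∑ k, B k ⬝ᵥ M ε *ᵥ B k) = fun ε =>
      (areaSq p)⁻¹ * (p ⬝ᵥ M ε *ᵥ p) + -1 * ((X ε ⬝ᵥ M ε *ᵥ X ε) * (areaSq (X ε))⁻¹) := by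
    funext ε
    rw [hB.sum_dotProduct_mulVec, mcfOperator]
    ring
  have hfrozen : HasJet2 (fun ε => p ⬝ᵥ M ε *ᵥ p) (p ⬝ᵥ S *ᵥ p) (p ⬝ᵥ T *ᵥ p) (p ⬝ᵥ U *ᵥ p) :=
    (HasJet2.dotProduct_mulVec (q := 0) (v := 0) (fun i => .const (p i)) hM hS hT).congr_jet
      (by simp) (by simp)
  have hjet := (HasJet2.dotProduct_mulVec hX hM hS hT).mul ((HasJet2.areaSq hX).inv hw)
  rw [hfun]
  convert (hfrozen.const_mul (areaSq p)⁻¹).add (hjet.const_mul (-1)) using 1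
  · ring
  · simp only [hB.sum_dotProduct_mul_dotProduct]
    rw [dotProduct_comm (S *ᵥ p) q]
    field_simp
    ring
  · subst hq'
    simp only [hB.sum_dotProduct_mul_dotProduct, sq (_ ⬝ᵥ B _)]
    simp only [mulVec_sub, mulVec_smul, dotProduct_sub, sub_dotProduct, dotProduct_smul,
      smul_dotProduct, smul_eq_mul, dotProduct_comm (_ *ᵥ p),
      dotProduct_mulVec_comm_of_isSymm hS p q]
    field_simp
    ring

/-- `F` is smooth at the space-time point `P` and solves the graphical mean curvature flow equation
near `P`. -/
structure IsMCFAt (F : ℝ × EuclideanSpace ℝ ι → ℝ) (P : ℝ × EuclideanSpace ℝ ι) : Prop where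
  contDiffAt : ContDiffAt ℝ ∞ F P
  eventuallyEq : dirDeriv timeDir F =ᶠ[𝓝 P]
    fun Q => mcfOperator (spatialGrad F Q) (spatialHess F Q)

theorem IsMCFAt.heatOp_derivatives {F : ℝ × EuclideanSpace ℝ ι → ℝ} {P : ℝ × EuclideanSpace ℝ ι}
    {B : Matrix ι ι ℝ} {p q v q' : ι → ℝ} {S T : Matrix ι ι ℝ} (hF : IsMCFAt F P)
    (hp : p = spatialGrad F P) (hB : IsTangentFrame p B) (x : ι → ℝ) (hS : S = spatialHess F P)
    (hT : T = spatialHess (dirDeriv (spatial x) F) P) (hq : q = S *ᵥ x) (hv : v = T *ᵥ x)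
    (hq' : q' = q - (p ⬝ᵥ q / areaSq p) • p) :
    dirDeriv (spatial x) (heatOp timeDir (fun k => spatial (B k)) F) P =
      -(2 / areaSq p) * ∑ k, (S *ᵥ p ⬝ᵥ B k) * (q ⬝ᵥ B k) ∧
    x ⬝ᵥ spatialHess (heatOp timeDir (fun k => spatial (B k)) F) P *ᵥ x =
      -(2 / areaSq p) * (∑ k, (S *ᵥ p ⬝ᵥ B k) * (v ⬝ᵥ B k) + q' ⬝ᵥ S *ᵥ q')
        - 4 / areaSq p * ∑ k, (T *ᵥ p ⬝ᵥ B k) * (q ⬝ᵥ B k)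
        + 4 * (p ⬝ᵥ q) / areaSq p ^ 2 * ∑ k, (S *ᵥ p ⬝ᵥ B k) * (q ⬝ᵥ B k)
        + 2 * (p ⬝ᵥ S *ᵥ p) / areaSq p ^ 2 * ∑ k, (q ⬝ᵥ B k) ^ 2 := by
  have hFP := hF.contDiffAt
  have hFx := contDiffAt_dirDeriv hFP (spatial x)
  have hH := contDiffAt_heatOp hFP timeDir fun k => spatial (B k)
  rw [dotProduct_spatialHess_mulVec hH]
  have hX (i : ι) :
      HasJet2 (fun ε : ℝ => spatialGrad F (P + ε • spatial x) i) (p i) (q i) (v i) := by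
    rw [hp, hq, hv, hS, hT, spatialHess_mulVec hFP, spatialHess_mulVec hFx]
    exact hasJet2_spatialGrad hFP (spatial x) i
  have hM (i j : ι) := hasJet2_spatialHess hFP (spatial x) i j
  rw [← hS, ← hT] at hM
  refine (hasJet2_line hH (spatial x)).unique (hB.hasJet2_mcfOperator_sub hX hM
    (hS ▸ isSymm_spatialHess hFP) (hT ▸ isSymm_spatialHess hFx) hq') ?_
  have hH_eq : heatOp timeDir (fun k => spatial (B k)) F =ᶠ[𝓝 P] fun Q =>
      mcfOperator (spatialGrad F Q) (spatialHess F Q) - ∑ k, B k ⬝ᵥ spatialHess F Q *ᵥ B k := by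
    filter_upwards [hF.eventuallyEq, Filter.eventually_all.2 fun k =>
      eventually_spatialHess_mulVec hFP (B k)] with Q hQ hQk
    simp only [heatOp, hQ, hQk, dirDeriv_spatial, dotProduct_comm (B _)]
  exact (tendsto_line P (spatial x)).eventually hH_eq

end Flow

section HeatJets

open Matrix

theorem hasHeatJet_snd_apply {V κ ι : Type*} [AddCommGroup V] [Module ℝ V] [Fintype κ]
    (e : V × (ι → ℝ)) (z : κ → V × (ι → ℝ)) (X : V × (ι → ℝ)) (i : ι) :
    HasHeatJet e z (fun Y => Y.2 i) X (fun k => (z k).2 i) (e.2 i) :=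
  .linearMap (LinearMap.proj i ∘ₗ LinearMap.snd ℝ V (ι → ℝ))

variable {ι : Type*} [Fintype ι]

/-- The lift of the frame `B` to the tangent bundle of the graph at a vector `ξ`, where `p` is the
gradient and `q` the Hessian applied to `ξ`. The second component is the infinitesimal parallel
transport of `ξ` along `B k` for the Levi-Civita connection of the graph. -/
noncomputable def frameLift (p q : ι → ℝ) (B : Matrix ι ι ℝ) (k : ι) :
    (ℝ × EuclideanSpace ℝ ι) × (ι → ℝ) :=
  (spatial (B k), -(q ⬝ᵥ B k / areaSq p) • p)

variable [DecidableEq ι] {F : ℝ × EuclideanSpace ℝ ι → ℝ} {P : ℝ × EuclideanSpace ℝ ι}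
  {p ξ : ι → ℝ} {S B : Matrix ι ι ℝ}

theorem hasHeatJet_spatialGrad (hF : ContDiffAt ℝ ∞ F P) (q : ι → ℝ) (i : ι) :
    HasHeatJet (timeDir, 0) (frameLift p q B) (fun Y => spatialGrad F Y.1 i) (P, ξ)
      (fun k => (spatialHess F P *ᵥ B k) i)
      (spatialGrad (heatOp timeDir (fun k => spatial (B k)) F) P i) := by
  refine (hasHeatJet_comp_fst (X := (P, ξ)) (contDiffAt_dirDeriv hF (spatial (Pi.single i 1)))
    _ _).congr_jet (fun k => ?_) (dirDeriv_heatOp hF _ _ _).self_of_nhds.symm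
  rw [spatialHess_mulVec hF]
  exact (dirDeriv_comm hF _ _).self_of_nhds

theorem hasHeatJet_spatialHess (hF : ContDiffAt ℝ ∞ F P) (q : ι → ℝ) (i j : ι) :
    HasHeatJet (timeDir, 0) (frameLift p q B) (fun Y => spatialHess F Y.1 i j) (P, ξ)
      (fun k => spatialHess (dirDeriv (spatial (B k)) F) P i j)
      (spatialHess (heatOp timeDir (fun k => spatial (B k)) F) P i j) := by
  refine (hasHeatJet_comp_fst (X := (P, ξ)) (contDiffAt_dirDeriv (contDiffAt_dirDeriv hF
    (spatial (Pi.single j 1))) (spatial (Pi.single i 1))) _ _).congr_jet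
    (fun k => (dirDeriv_comm₃ hF _ _ _).self_of_nhds) ?_
  exact ((dirDeriv_congr (dirDeriv_heatOp hF _ _ _) _).trans
    (dirDeriv_heatOp (contDiffAt_dirDeriv hF _) _ _ _)).self_of_nhds.symm

theorem hasHeatJet_spatialHess_mulVec (hF : ContDiffAt ℝ ∞ F P) (q : ι → ℝ) (i : ι) :
    HasHeatJet (timeDir, 0) (frameLift p q B) (fun Y => (spatialHess F Y.1 *ᵥ Y.2) i) (P, ξ)
      (fun k => (spatialHess (dirDeriv (spatial (B k)) F) P *ᵥ ξ
        + -(q ⬝ᵥ B k / areaSq p) • spatialHess F P *ᵥ p) i)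
      ((spatialHess (heatOp timeDir (fun k => spatial (B k)) F) P *ᵥ ξ - (2 : ℝ) • ∑ k,
        -(q ⬝ᵥ B k / areaSq p) • spatialHess (dirDeriv (spatial (B k)) F) P *ᵥ p) i) := by
  refine (HasHeatJet.dotProduct (fun j => hasHeatJet_spatialHess hF q i j) fun j =>
    hasHeatJet_snd_apply (timeDir, 0) (frameLift p q B) (P, ξ) j).congr_jet (fun k => ?_) ?_ <;>
  · simp [frameLift, mulVec]

theorem IsMCFAt.hasHeatJet_areaSq (hF : IsMCFAt F P) (hp : p = spatialGrad F P)
    (hB : IsTangentFrame p B) (hS : S = spatialHess F P) (q : ι → ℝ) :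
    HasHeatJet (timeDir, 0) (frameLift p q B) (fun Y => areaSq (spatialGrad F Y.1)) (P, ξ)
      (fun k => 2 * (S *ᵥ p ⬝ᵥ B k))
      (-2 * ∑ k, ∑ l, (B k ⬝ᵥ S *ᵥ B l) ^ 2 - 6 / areaSq p * ∑ k, (S *ᵥ p ⬝ᵥ B k) ^ 2) := by
  have hFP := hF.contDiffAt
  have hsymm : S.IsSymm := hS ▸ isSymm_spatialHess hFP
  have hgrad (i : ι) := hasHeatJet_spatialGrad (p := p) (ξ := ξ) (B := B) hFP q i
  have hH := (hF.heatOp_derivatives hp hB p hS rfl rfl rfl rfl).1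
  rw [dirDeriv_spatial] at hH
  have hSB (k l : ι) : S *ᵥ B k ⬝ᵥ B l = B k ⬝ᵥ S *ᵥ B l := by
    rw [dotProduct_comm, dotProduct_mulVec_comm_of_isSymm hsymm]
  have hpS (k : ι) : p ⬝ᵥ S *ᵥ B k = S *ᵥ p ⬝ᵥ B k := by
    rw [dotProduct_mulVec_comm_of_isSymm hsymm, dotProduct_comm]
  have hnorm (k : ι) : S *ᵥ B k ⬝ᵥ S *ᵥ B k =
      ∑ l, (B k ⬝ᵥ S *ᵥ B l) ^ 2 + (S *ᵥ p ⬝ᵥ B k) ^ 2 / areaSq p := by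
    have h := hB.sum_dotProduct_mul_dotProduct (S *ᵥ B k) (S *ᵥ B k)
    simp only [hSB, hpS, ← sq] at h
    rw [h, sub_add_cancel]
  refine ((HasHeatJet.const 1).add (HasHeatJet.dotProduct hgrad hgrad)).congr_jet
    (fun k => ?_) ?_
  · simp only [← hp, ← hS, Pi.zero_apply, dotProduct_comm _ p, hpS]
    ring
  · simp only [← hp, ← hS, dotProduct_comm p, hH, hnorm, Finset.sum_add_distrib, ← sq,
      ← Finset.sum_div]
    ring

/-- The first fundamental form of the graph of `F` on the tangent bundle of space-time. -/
noncomputable def metricForm (F : ℝ × EuclideanSpace ℝ ι → ℝ)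
    (Y : (ℝ × EuclideanSpace ℝ ι) × (ι → ℝ)) : ℝ :=
  Y.2 ⬝ᵥ graphMetric (spatialGrad F Y.1) *ᵥ Y.2

/-- The Hessian form of `F` on the tangent bundle of space-time; this is the second fundamental form
of the graph multiplied by `√(1 + |DF|²)`. -/
noncomputable def hessForm (F : ℝ × EuclideanSpace ℝ ι → ℝ)
    (Y : (ℝ × EuclideanSpace ℝ ι) × (ι → ℝ)) : ℝ :=
  Y.2 ⬝ᵥ spatialHess F Y.1 *ᵥ Y.2

theorem IsMCFAt.hasHeatJet_spatialGrad_dotProduct (hF : IsMCFAt F P) (hp : p = spatialGrad F P)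
    (hB : IsTangentFrame p B) {q : ι → ℝ} (hq : q = spatialHess F P *ᵥ ξ) :
    HasHeatJet (timeDir, 0) (frameLift p q B) (fun Y => spatialGrad F Y.1 ⬝ᵥ Y.2) (P, ξ)
      (fun k => q ⬝ᵥ B k / areaSq p) 0 := by
  have hFP := hF.contDiffAt
  have hgrad (i : ι) := hasHeatJet_spatialGrad (p := p) (ξ := ξ) (B := B) hFP q i
  have hvec (i : ι) := hasHeatJet_snd_apply (timeDir, 0) (frameLift p q B) (P, ξ) i
  have hH := (hF.heatOp_derivatives hp hB ξ rfl rfl hq rfl rfl).1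
  rw [dirDeriv_spatial] at hH
  have hSB (x : ι → ℝ) (k : ι) : spatialHess F P *ᵥ B k ⬝ᵥ x = spatialHess F P *ᵥ x ⬝ᵥ B k := by
    rw [dotProduct_comm, dotProduct_mulVec_comm_of_isSymm (isSymm_spatialHess hFP),
      dotProduct_comm]
  refine (HasHeatJet.dotProduct hgrad hvec).congr_jet (fun k => ?_) ?_
  · have hw := (areaSq_pos p).ne'
    simp only [frameLift, ← hp, dotProduct_smul, smul_eq_mul, hSB ξ, ← hq]
    field_simp
    rw [areaSq]
    ring
  · simp only [frameLift, ← hp, hH, hSB p, dotProduct_smul, smul_eq_mul, dotProduct_zero,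
      Finset.mul_sum, add_zero, ← Finset.sum_sub_distrib]
    exact Finset.sum_eq_zero fun k _ => by ring

theorem IsMCFAt.hasHeatJet_metricForm (hF : IsMCFAt F P) (hp : p = spatialGrad F P)
    (hB : IsTangentFrame p B) {q : ι → ℝ} (hq : q = spatialHess F P *ᵥ ξ) :
    HasHeatJet (timeDir, 0) (frameLift p q B) (metricForm F) (P, ξ) 0
      (-(2 / areaSq p) * ∑ k, (q ⬝ᵥ B k) ^ 2) := by
  have hvec (i : ι) := hasHeatJet_snd_apply (timeDir, 0) (frameLift p q B) (P, ξ) i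
  have hpair := hF.hasHeatJet_spatialGrad_dotProduct hp hB hq
  have hform : metricForm F = fun Y => Y.2 ⬝ᵥ Y.2 +
      (spatialGrad F Y.1 ⬝ᵥ Y.2) * (spatialGrad F Y.1 ⬝ᵥ Y.2) :=
    funext fun Y => dotProduct_graphMetric_mulVec _ _ _
  rw [hform]
  refine ((HasHeatJet.dotProduct hvec hvec).add (hpair.mul hpair)).congr_jet (fun k => ?_) ?_
  · simp only [frameLift, ← hp, smul_dotProduct, smul_eq_mul, Pi.zero_apply, dotProduct_comm ξ]
    ring
  · have hw := (areaSq_pos p).ne'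
    have hpp : p ⬝ᵥ p = areaSq p - 1 := (add_sub_cancel_left _ _).symm
    simp only [frameLift, dotProduct_smul, smul_dotProduct, smul_eq_mul, zero_dotProduct,
      dotProduct_zero, hpp, Finset.mul_sum, zero_mul, mul_zero, zero_add, zero_sub,
      ← Finset.sum_neg_distrib, ← Finset.sum_add_distrib]
    refine Finset.sum_congr rfl fun k _ => ?_
    field_simp
    ring

theorem IsMCFAt.exists_hasHeatJet_hessForm (hF : IsMCFAt F P) (hp : p = spatialGrad F P)
    (hB : IsTangentFrame p B) (hS : S = spatialHess F P) {q q' : ι → ℝ} (hq : q = S *ᵥ ξ)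
    (hq' : q' = q - (p ⬝ᵥ q / areaSq p) • p) :
    ∃ N' : ι → ℝ, HasHeatJet (timeDir, 0) (frameLift p q B) (hessForm F) (P, ξ) N'
      (-(2 / areaSq p) * (∑ k, (S *ᵥ p ⬝ᵥ B k) * N' k + q' ⬝ᵥ S *ᵥ q')) := by
  have hFP := hF.contDiffAt
  have hSsymm : S.IsSymm := hS ▸ isSymm_spatialHess hFP
  set T : Matrix ι ι ℝ := spatialHess (dirDeriv (spatial ξ) F) P with hT
  have hTsymm : T.IsSymm := isSymm_spatialHess (contDiffAt_dirDeriv hFP _)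
  have hTB (x : ι → ℝ) (k : ι) :
      x ⬝ᵥ spatialHess (dirDeriv (spatial (B k)) F) P *ᵥ ξ = T *ᵥ x ⬝ᵥ B k := by
    rw [spatialHess_dirDeriv_mulVec hFP, dotProduct_mulVec_comm_of_isSymm hTsymm, dotProduct_comm]
  have hTBsymm (k : ι) := isSymm_spatialHess (contDiffAt_dirDeriv hFP (spatial (B k)))
  have hvec (i : ι) := hasHeatJet_snd_apply (timeDir, 0) (frameLift p q B) (P, ξ) i
  have hmul (i : ι) := hasHeatJet_spatialHess_mulVec (p := p) (ξ := ξ) (B := B) hFP q i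
  have hH := (hF.heatOp_derivatives hp hB ξ hS hT hq rfl hq').2
  refine ⟨fun k => T *ᵥ ξ ⬝ᵥ B k - 2 * (p ⬝ᵥ q) / areaSq p * (q ⬝ᵥ B k),
    (HasHeatJet.dotProduct hvec hmul).congr_jet (fun k => ?_) ?_⟩
  · simp only [frameLift, dotProduct_add, hTB, ← hS, ← hq, dotProduct_smul, smul_dotProduct,
      smul_eq_mul, dotProduct_mulVec_comm_of_isSymm hSsymm ξ]
    ring
  · simp only [frameLift, dotProduct_add, dotProduct_sub, dotProduct_sum, hTB, ← hS,
      dotProduct_smul, smul_dotProduct, smul_eq_mul, hH, zero_dotProduct,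
      fun k => dotProduct_mulVec_comm_of_isSymm (hTBsymm k) ξ]
    generalize q' ⬝ᵥ S *ᵥ q' = E
    simp only [mulVec_smul, smul_dotProduct, smul_eq_mul, mul_add, Finset.mul_sum, zero_add,
      add_sub_right_comm, add_right_comm _ (_ * E), ← Finset.sum_add_distrib,
      ← Finset.sum_sub_distrib]
    congr 1
    exact Finset.sum_congr rfl fun k _ => by ring

end HeatJets

section TestRatio

open Matrix

variable {ι : Type*} [Fintype ι]

/-- The cutoff function `R² - |x - x₀|²` at the space-time point `P = (t, x)`. -/
noncomputable def cutoff (x₀ : EuclideanSpace ℝ ι) (R : ℝ) (P : ℝ × EuclideanSpace ℝ ι) : ℝ :=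
  R ^ 2 - ‖P.2 - x₀‖ ^ 2

theorem hasHeatJet_cutoff (x₀ : EuclideanSpace ℝ ι) (R : ℝ) (P : ℝ × EuclideanSpace ℝ ι)
    (p q ξ : ι → ℝ) (B : Matrix ι ι ℝ) :
    HasHeatJet (timeDir, 0) (frameLift p q B) (fun Y => cutoff x₀ R Y.1) (P, ξ)
      (fun k => -2 * ((P.2 - x₀).ofLp ⬝ᵥ B k)) (2 * ∑ k, B k ⬝ᵥ B k) := by
  have hcoord (i : ι) : HasHeatJet (timeDir, 0) (frameLift p q B)
      (fun Y : (ℝ × EuclideanSpace ℝ ι) × (ι → ℝ) => (Y.1.2 - x₀).ofLp i) (P, ξ)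
      (fun k => B k i) ((0 : ι → ℝ) i) := by
    simp only [sub_eq_add_neg]
    refine ((HasHeatJet.linearMap (LinearMap.proj i ∘ₗ
      (WithLp.linearEquiv 2 ℝ (ι → ℝ)).toLinearMap ∘ₗ LinearMap.snd ℝ ℝ _ ∘ₗ
      LinearMap.fst ℝ _ (ι → ℝ))).add (.const (-x₀ i))).congr_jet (fun k => ?_) ?_
    · simp [frameLift, spatial]
    · simp [timeDir]
  have hfun : (fun Y : (ℝ × EuclideanSpace ℝ ι) × (ι → ℝ) => cutoff x₀ R Y.1) = fun Y =>
      R ^ 2 - (Y.1.2 - x₀).ofLp ⬝ᵥ (Y.1.2 - x₀).ofLp := by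
    funext Y
    rw [cutoff, EuclideanSpace.real_norm_sq_eq]
    simp only [dotProduct, sq]
  rw [hfun]
  refine ((HasHeatJet.const (R ^ 2)).sub (HasHeatJet.dotProduct hcoord hcoord)).congr_jet
    (fun k => ?_) ?_
  · rw [dotProduct_comm (B k), Pi.zero_apply]
    ring
  · simp only [zero_dotProduct, dotProduct_zero]
    ring

theorem hasHeatJet_elapsed (s₁ : ℝ) (P : ℝ × EuclideanSpace ℝ ι) (p q ξ : ι → ℝ)
    (B : Matrix ι ι ℝ) :
    HasHeatJet (timeDir, 0) (frameLift p q B) (fun Y => Y.1.1 - s₁) (P, ξ) 0 1 :=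
  ((HasHeatJet.linearMap (LinearMap.fst ℝ ℝ (EuclideanSpace ℝ ι) ∘ₗ
    LinearMap.fst ℝ (ℝ × EuclideanSpace ℝ ι) (ι → ℝ))).sub (.const s₁)).congr_jet
    (fun k => by simp [frameLift, spatial]) (by simp [timeDir])

variable [DecidableEq ι]

/-- The function whose maximum is estimated, on the tangent bundle of space-time: the square of the
directional curvature `hessForm F / metricForm F`, localized by the cutoff and multiplied by the
elapsed time and by a bounded function of the gradient. At the zero vector its value is
`0 / 0 = 0`. -/
noncomputable def testRatio (F : ℝ × EuclideanSpace ℝ ι → ℝ) (s₁ : ℝ) (x₀ : EuclideanSpace ℝ ι)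
    (R W : ℝ) (Y : (ℝ × EuclideanSpace ℝ ι) × (ι → ℝ)) : ℝ :=
  (Y.1.1 - s₁) * cutoff x₀ R Y.1 ^ 2 * hessForm F Y ^ 2 /
    ((2 * W - areaSq (spatialGrad F Y.1)) * metricForm F Y ^ 2)

/-- The logarithm of `testRatio`, away from its zeros, as a sum of logarithms of the factors. -/
noncomputable def logTestRatio (F : ℝ × EuclideanSpace ℝ ι → ℝ) (s₁ : ℝ) (x₀ : EuclideanSpace ℝ ι)
    (R W : ℝ) (Y : (ℝ × EuclideanSpace ℝ ι) × (ι → ℝ)) : ℝ :=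
  Real.log (Y.1.1 - s₁) + 2 * Real.log (cutoff x₀ R Y.1)
    - Real.log (2 * W - areaSq (spatialGrad F Y.1))
    + (2 * Real.log (hessForm F Y) - 2 * Real.log (metricForm F Y))

variable {F : ℝ × EuclideanSpace ℝ ι → ℝ} {s₁ R W : ℝ} {x₀ : EuclideanSpace ℝ ι}
  {P : ℝ × EuclideanSpace ℝ ι} {p ξ : ι → ℝ} {S B : Matrix ι ι ℝ}

theorem log_testRatio {Y : (ℝ × EuclideanSpace ℝ ι) × (ι → ℝ)}
    (hY : testRatio F s₁ x₀ R W Y ≠ 0) :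
    Real.log (testRatio F s₁ x₀ R W Y) = logTestRatio F s₁ x₀ R W Y := by
  have h := hY
  simp only [testRatio, div_ne_zero_iff, mul_ne_zero_iff, ne_eq, OfNat.ofNat_ne_zero,
    not_false_eq_true, pow_eq_zero_iff] at h
  obtain ⟨⟨⟨hτ, hσ⟩, hN⟩, hm, hD⟩ := h
  rw [testRatio, logTestRatio, Real.log_div (by positivity) (by positivity),
    Real.log_mul (by positivity) (by positivity), Real.log_mul hτ (by positivity),
    Real.log_mul hm (by positivity), Real.log_pow, Real.log_pow, Real.log_pow]
  push_cast
  ring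

theorem IsMCFAt.exists_hasHeatJet_log_hessForm_sub (hF : IsMCFAt F P) (hp : p = spatialGrad F P)
    (hB : IsTangentFrame p B) (hS : S = spatialHess F P) {κ : ℝ}
    (hξ : S *ᵥ ξ = κ • graphMetric p *ᵥ ξ) (hN : hessForm F (P, ξ) ≠ 0)
    (hD : metricForm F (P, ξ) ≠ 0) :
    ∃ y : ι → ℝ, HasHeatJet (timeDir, 0) (frameLift p (S *ᵥ ξ) B)
      (fun Y => 2 * Real.log (hessForm F Y) - 2 * Real.log (metricForm F Y)) (P, ξ)
      (fun k => 2 * y k) (∑ k, (2 * y k ^ 2 - 4 / areaSq p * (S *ᵥ p ⬝ᵥ B k) * y k)) := by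
  have hw := (areaSq_pos p).ne'
  have hDval : ξ ⬝ᵥ graphMetric p *ᵥ ξ = metricForm F (P, ξ) := by rw [hp, metricForm]
  have hNval : ξ ⬝ᵥ S *ᵥ ξ = hessForm F (P, ξ) := by rw [hS, hessForm]
  have hND : hessForm F (P, ξ) = κ * metricForm F (P, ξ) := by
    rw [← hDval, ← hNval, hξ, dotProduct_smul, smul_eq_mul]
  have hq' : κ • ξ = S *ᵥ ξ - (p ⬝ᵥ S *ᵥ ξ / areaSq p) • p := by
    rw [hξ, dotProduct_smul, dotProduct_graphMetric_mulVec_self, graphMetric_mulVec, smul_eq_mul,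
      mul_left_comm, mul_div_cancel_left₀ _ hw, smul_add, mul_smul, add_sub_cancel_right]
  have hsum : ∑ k, (S *ᵥ ξ ⬝ᵥ B k) ^ 2 = κ ^ 2 * metricForm F (P, ξ) := by
    simp only [hξ, smul_dotProduct, smul_eq_mul, mul_pow, ← Finset.mul_sum,
      hB.sum_sq_graphMetric_mulVec_dotProduct, hDval]
  obtain ⟨N', hNjet⟩ := hF.exists_hasHeatJet_hessForm hp hB hS rfl hq'
  have hDjet := hF.hasHeatJet_metricForm hp hB (congrArg (· *ᵥ ξ) hS)
  refine ⟨fun k => N' k / hessForm F (P, ξ), (((hNjet.log hN).const_mul 2).sub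
    ((hDjet.log hD).const_mul 2)).congr_jet (fun k => by simp) ?_⟩
  have hr : ∑ k, (S *ᵥ p ⬝ᵥ B k) * N' k =
      hessForm F (P, ξ) * ∑ k, (S *ᵥ p ⬝ᵥ B k) * (N' k / hessForm F (P, ξ)) := by
    rw [Finset.mul_sum]
    exact Finset.sum_congr rfl fun k _ => by field_simp
  simp only [hsum, hr, smul_dotProduct, dotProduct_smul, mulVec_smul, smul_eq_mul, hNval,
    Finset.sum_sub_distrib, mul_assoc, ← Finset.mul_sum, Pi.zero_apply, zero_div, ne_eq,
    OfNat.ofNat_ne_zero, not_false_eq_true, zero_pow, Finset.sum_const_zero, add_zero]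
  field_simp
  rw [hND]
  ring

theorem IsMCFAt.exists_hasHeatJet_logTestRatio (hF : IsMCFAt F P) (hp : p = spatialGrad F P)
    (hB : IsTangentFrame p B) (hS : S = spatialHess F P) {κ : ℝ}
    (hξ : S *ᵥ ξ = κ • graphMetric p *ᵥ ξ) {e d : ι → ℝ}
    (he : ∀ k, e k = -2 * ((P.2 - x₀).ofLp ⬝ᵥ B k) / cutoff x₀ R P)
    (hd : ∀ k, d k = S *ᵥ p ⬝ᵥ B k / (2 * W - areaSq p))
    (hne : testRatio F s₁ x₀ R W (P, ξ) ≠ 0) :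
    ∃ y : ι → ℝ, HasHeatJet (timeDir, 0) (frameLift p (S *ᵥ ξ) B)
      (logTestRatio F s₁ x₀ R W) (P, ξ) (fun k => 2 * (e k + y k + d k))
      (1 / (P.1 - s₁) - 2 / (2 * W - areaSq p) * ∑ k, ∑ l, (B k ⬝ᵥ S *ᵥ B l) ^ 2 +
        ∑ k, (4 * (B k ⬝ᵥ B k) / cutoff x₀ R P + 2 * e k ^ 2 + 2 * y k ^ 2 - 4 * d k ^ 2
          - (2 * W - areaSq p) / areaSq p * (4 * d k * y k + 6 * d k ^ 2))) := by
  have hw := (areaSq_pos p).ne'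
  simp only [testRatio, div_ne_zero_iff, mul_ne_zero_iff, ne_eq, OfNat.ofNat_ne_zero,
    not_false_eq_true, pow_eq_zero_iff, ← hp] at hne
  obtain ⟨⟨⟨hτ, hσ⟩, hN⟩, hm, hD⟩ := hne
  obtain ⟨y, hy⟩ := hF.exists_hasHeatJet_log_hessForm_sub hp hB hS hξ hN hD
  have hmjet := (HasHeatJet.const (2 * W)).sub
    (hF.hasHeatJet_areaSq (ξ := ξ) hp hB hS (S *ᵥ ξ))
  refine ⟨y, (((((hasHeatJet_elapsed s₁ P _ _ ξ B).log hτ).add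
    (((hasHeatJet_cutoff x₀ R P _ _ ξ B).log hσ).const_mul 2)).sub (hmjet.log (hp ▸ hm))).add
    hy).congr_jet (fun k => ?_) ?_⟩
  · simp only [he, hd, ← hp, Pi.zero_apply]
    ring
  · have hr (k : ι) : S *ᵥ p ⬝ᵥ B k = (2 * W - areaSq p) * d k := by
      rw [hd, mul_div_cancel₀ _ hm]
    have hdrift : ∑ k, ((0 - 2 * ((2 * W - areaSq p) * d k)) / (2 * W - areaSq p)) ^ 2 =
        ∑ k, 4 * d k ^ 2 :=
      Finset.sum_congr rfl fun k _ => by field_simp; ring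
    simp only [← he, ← hp, Pi.zero_apply, hr, hdrift]
    simp only [zero_div, ne_eq, OfNat.ofNat_ne_zero, not_false_eq_true, zero_pow,
      Finset.sum_const_zero, Finset.sum_sub_distrib, Finset.sum_add_distrib, mul_pow, mul_add,
      mul_assoc, ← Finset.mul_sum, ← Finset.sum_div]
    field_simp
    ring

theorem cutoff_terms_le {e y d b σ r μ : ℝ} (hcrit : e + y + d = 0) (hb : b ≤ 1) (hσ : 0 < σ)
    (hσr : σ ≤ r) (he : e ^ 2 ≤ 4 * r / σ ^ 2) (hμ : 0 ≤ μ) :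
    4 * b / σ + 2 * e ^ 2 + 2 * y ^ 2 - 4 * d ^ 2 - μ * (4 * d * y + 6 * d ^ 2) ≤
      (8 * μ + 28) * r / σ ^ 2 := by
  obtain rfl : y = -e - d := by linarith
  have hbσ : 4 * b / σ ≤ 4 * r / σ ^ 2 := by
    rw [div_le_div_iff₀ hσ (by positivity)]
    nlinarith [mul_le_mul_of_nonneg_right (hb.trans ((one_le_div hσ).2 hσr)) (sq_nonneg σ),
      div_mul_cancel₀ r hσ.ne']
  calc 4 * b / σ + 2 * e ^ 2 + 2 * (-e - d) ^ 2 - 4 * d ^ 2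
        - μ * (4 * d * (-e - d) + 6 * d ^ 2)
      = 4 * b / σ + (2 * μ + 6) * e ^ 2 - (2 * μ + 2) * (e - d) ^ 2 := by ring
    _ ≤ 4 * b / σ + (2 * μ + 6) * e ^ 2 := sub_le_self _ (by positivity)
    _ ≤ 4 * r / σ ^ 2 + (2 * μ + 6) * (4 * r / σ ^ 2) := by gcongr
    _ = (8 * μ + 28) * r / σ ^ 2 := by ring

theorem sq_cutoff_drift_le (hB : IsTangentFrame p B) (hσ : 0 < cutoff x₀ R P) (k : ι) :
    (-2 * ((P.2 - x₀).ofLp ⬝ᵥ B k) / cutoff x₀ R P) ^ 2 ≤ 4 * R ^ 2 / cutoff x₀ R P ^ 2 := by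
  have hcs : ((P.2 - x₀).ofLp ⬝ᵥ B k) ^ 2 ≤ ‖P.2 - x₀‖ ^ 2 * (B k ⬝ᵥ B k) := by
    rw [EuclideanSpace.real_norm_sq_eq]
    simpa only [dotProduct, sq] using
      Finset.sum_mul_sq_le_sq_mul_sq Finset.univ (P.2 - x₀).ofLp (B k)
  have hball : ‖P.2 - x₀‖ ^ 2 ≤ R ^ 2 := sub_nonneg.1 hσ.le
  rw [div_pow]
  gcongr
  nlinarith [hB.dotProduct_self k, sq_nonneg (p ⬝ᵥ B k), sq_nonneg ‖P.2 - x₀‖]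

theorem continuousAt_spatialGrad (hF : ContDiffAt ℝ ∞ F P) : ContinuousAt (spatialGrad F) P :=
  continuousAt_pi.2 fun _ => (contDiffAt_dirDeriv hF _).continuousAt

theorem continuousAt_spatialHess (hF : ContDiffAt ℝ ∞ F P) : ContinuousAt (spatialHess F) P :=
  continuousAt_pi.2 fun _ => continuousAt_pi.2 fun _ =>
    (contDiffAt_dirDeriv (contDiffAt_dirDeriv hF _) _).continuousAt

theorem continuousAt_testRatio (hF : ContDiffAt ℝ ∞ F P)
    (hm : 2 * W - areaSq (spatialGrad F P) ≠ 0) (hD : metricForm F (P, ξ) ≠ 0) :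
    ContinuousAt (testRatio F s₁ x₀ R W) (P, ξ) := by
  have hgrad : ContinuousAt (fun Y : (ℝ × EuclideanSpace ℝ ι) × (ι → ℝ) => spatialGrad F Y.1)
      (P, ξ) := (continuousAt_spatialGrad hF).fst''
  have hhess : ContinuousAt (fun Y : (ℝ × EuclideanSpace ℝ ι) × (ι → ℝ) => spatialHess F Y.1)
      (P, ξ) := (continuousAt_spatialHess hF).fst''
  have hdot {a b : (ℝ × EuclideanSpace ℝ ι) × (ι → ℝ) → ι → ℝ} (ha : ContinuousAt a (P, ξ))
      (hb : ContinuousAt b (P, ξ)) : ContinuousAt (fun Y => a Y ⬝ᵥ b Y) (P, ξ) :=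
    (continuous_fst.dotProduct continuous_snd).continuousAt.comp (ha.prodMk hb)
  have hN : ContinuousAt (hessForm F) (P, ξ) := hdot continuousAt_snd <|
    (continuous_fst.matrix_mulVec continuous_snd).continuousAt.comp (hhess.prodMk continuousAt_snd)
  have hDc : ContinuousAt (metricForm F) (P, ξ) := by
    rw [show metricForm F = fun Y =>
      Y.2 ⬝ᵥ Y.2 + (spatialGrad F Y.1 ⬝ᵥ Y.2) * (spatialGrad F Y.1 ⬝ᵥ Y.2) from
      funext fun Y => dotProduct_graphMetric_mulVec _ _ _]
    exact (hdot continuousAt_snd continuousAt_snd).add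
      ((hdot hgrad continuousAt_snd).mul (hdot hgrad continuousAt_snd))
  have hσ : ContinuousAt (fun Y : (ℝ × EuclideanSpace ℝ ι) × (ι → ℝ) => cutoff x₀ R Y.1)
      (P, ξ) := by
    unfold cutoff
    fun_prop
  have hmc := continuousAt_const (y := 2 * W) |>.sub
    (continuousAt_const (y := (1 : ℝ)) |>.add (hdot hgrad hgrad))
  exact (((continuousAt_fst.fst.sub continuousAt_const).mul (hσ.pow 2)).mul (hN.pow 2)).div
    (hmc.mul (hDc.pow 2)) (mul_ne_zero hm (pow_ne_zero 2 hD))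

theorem testRatio_eq_mul_div_sq (Y : (ℝ × EuclideanSpace ℝ ι) × (ι → ℝ)) :
    testRatio F s₁ x₀ R W Y = (Y.1.1 - s₁) * cutoff x₀ R Y.1 ^ 2 /
      (2 * W - areaSq (spatialGrad F Y.1)) * (hessForm F Y / metricForm F Y) ^ 2 := by
  rw [testRatio, mul_div_mul_comm, div_pow]

theorem metricForm_pos (hξ : ξ ≠ 0) : 0 < metricForm F (P, ξ) :=
  (posDef_graphMetric (spatialGrad F P)).dotProduct_mulVec_pos hξ

theorem ne_zero_of_testRatio_ne_zero (h : testRatio F s₁ x₀ R W (P, ξ) ≠ 0) : ξ ≠ 0 := by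
  rintro rfl
  simp [testRatio, hessForm] at h

theorem spatialHess_mulVec_of_testRatio_le (hF : ContDiffAt ℝ ∞ F P)
    (hpos : 0 < testRatio F s₁ x₀ R W (P, ξ))
    (hmax : ∀ y, testRatio F s₁ x₀ R W (P, y) ≤ testRatio F s₁ x₀ R W (P, ξ)) :
    spatialHess F P *ᵥ ξ =
      (hessForm F (P, ξ) / metricForm F (P, ξ)) • graphMetric (spatialGrad F P) *ᵥ ξ := by
  have hD := metricForm_pos (F := F) (P := P) (ne_zero_of_testRatio_ne_zero hpos.ne')
  refine mulVec_eq_smul_mulVec_of_abs_le (isSymm_spatialHess hF) (isSymm_graphMetric _)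
    (div_mul_cancel₀ _ hD.ne').symm fun y => ?_
  obtain rfl | hy := eq_or_ne y 0
  · simp
  have hDy := metricForm_pos (F := F) (P := P) hy
  have h := hmax y
  rw [testRatio_eq_mul_div_sq, testRatio_eq_mul_div_sq (P, ξ)] at h
  rw [testRatio_eq_mul_div_sq] at hpos
  have hcoef := pos_of_mul_pos_left hpos (sq_nonneg _)
  have habs := sq_le_sq.1 (le_of_mul_le_mul_left h hcoef)
  rwa [abs_div, abs_of_pos hDy, div_le_iff₀ hDy] at habs

theorem eventually_logTestRatio_le (hF : ContDiffAt ℝ ∞ F P)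
    (hw : 2 * W ≠ areaSq (spatialGrad F P)) (hpos : 0 < testRatio F s₁ x₀ R W (P, ξ))
    (hmax : ∀ᶠ Y in 𝓝 (P, ξ), Y.1.1 ≤ P.1 →
      testRatio F s₁ x₀ R W Y ≤ testRatio F s₁ x₀ R W (P, ξ)) :
    ∀ᶠ Y in 𝓝 (P, ξ), Y.1.1 ≤ P.1 →
      logTestRatio F s₁ x₀ R W Y ≤ logTestRatio F s₁ x₀ R W (P, ξ) := by
  have hcont := continuousAt_testRatio (s₁ := s₁) (x₀ := x₀) (R := R) hF (sub_ne_zero.2 hw)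
    (metricForm_pos (ne_zero_of_testRatio_ne_zero hpos.ne')).ne'
  filter_upwards [hmax, hcont.eventually (lt_mem_nhds hpos)] with Y hY hYpos hle
  rw [← log_testRatio hYpos.ne', ← log_testRatio hpos.ne']
  exact Real.log_le_log hYpos (hY hle)

theorem IsMCFAt.curvature_le_of_eventually_testRatio_le (hF : IsMCFAt F P)
    (hw : areaSq (spatialGrad F P) < 2 * W) (hσ : 0 < cutoff x₀ R P)
    (hpos : 0 < testRatio F s₁ x₀ R W (P, ξ)) {κ : ℝ}
    (hξ : spatialHess F P *ᵥ ξ = κ • graphMetric (spatialGrad F P) *ᵥ ξ)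
    (hmax : ∀ᶠ Y in 𝓝 (P, ξ), Y.1.1 ≤ P.1 →
      testRatio F s₁ x₀ R W Y ≤ testRatio F s₁ x₀ R W (P, ξ)) :
    2 * κ ^ 2 / (2 * W - areaSq (spatialGrad F P)) ≤ 1 / (P.1 - s₁) +
      Fintype.card ι * ((8 * ((2 * W - areaSq (spatialGrad F P)) / areaSq (spatialGrad F P)) + 28) *
        R ^ 2 / cutoff x₀ R P ^ 2) := by
  set p := spatialGrad F P with hp
  obtain ⟨B, hB⟩ := exists_isTangentFrame p
  have hm : 0 < 2 * W - areaSq p := sub_pos.2 hw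
  have hξ0 := ne_zero_of_testRatio_ne_zero hpos.ne'
  obtain ⟨y, hy⟩ := hF.exists_hasHeatJet_logTestRatio hp hB rfl hξ (fun _ => rfl) (fun _ => rfl)
    hpos.ne'
  have hline (z : (ℝ × EuclideanSpace ℝ ι) × (ι → ℝ)) := (tendsto_line (P, ξ) z).eventually
    (eventually_logTestRatio_le hF.contDiffAt hw.ne' hpos hmax)
  obtain ⟨hcrit, hheat⟩ := hy.of_isLocalMax
    (by
      filter_upwards [(hline (timeDir, 0)).filter_mono nhdsWithin_le_nhds,
        self_mem_nhdsWithin] with ε hε hneg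
      exact hε (by simpa [timeDir] using le_of_lt hneg))
    (fun k => by
      filter_upwards [hline (frameLift p (spatialHess F P *ᵥ ξ) B k)] with ε hε
      simpa [frameLift, spatial] using hε (by simp [frameLift, spatial]))
  have hterms := Finset.sum_le_sum fun k (_ : k ∈ Finset.univ) =>
    cutoff_terms_le (μ := (2 * W - areaSq p) / areaSq p)
      ((mul_eq_zero.1 (hcrit k)).resolve_left two_ne_zero)
      (le_of_add_le_of_nonneg_left (hB.dotProduct_self k).le (sq_nonneg _)) hσ
      (sub_le_self _ (sq_nonneg _)) (sq_cutoff_drift_le hB hσ k)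
      (div_pos hm (areaSq_pos p)).le
  rw [Finset.sum_const, Finset.card_univ, nsmul_eq_mul] at hterms
  have hκ := hB.sq_eigenvalue_le hξ hξ0
  have hκm := mul_le_mul_of_nonneg_left hκ (div_pos two_pos hm).le
  rw [mul_div_right_comm]
  linarith

theorem IsMCFAt.two_mul_testRatio_le (hF : IsMCFAt F P) (hw : areaSq (spatialGrad F P) ≤ W)
    (hτ : 0 < P.1 - s₁) (hσ : 0 < cutoff x₀ R P)
    (hmax : ∀ᶠ Q in 𝓝 P, Q.1 ≤ P.1 →
      ∀ y, testRatio F s₁ x₀ R W (Q, y) ≤ testRatio F s₁ x₀ R W (P, ξ)) :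
    2 * testRatio F s₁ x₀ R W (P, ξ) ≤
      R ^ 4 + 36 * Fintype.card ι * W * (P.1 - s₁) * R ^ 2 := by
  have hw1 := one_le_areaSq (spatialGrad F P)
  have hW : 1 ≤ W := hw1.trans hw
  obtain hnonpos | hpos := le_or_gt (testRatio F s₁ x₀ R W (P, ξ)) 0
  · exact (by linarith : 2 * testRatio F s₁ x₀ R W (P, ξ) ≤ 0).trans (by positivity)
  have hm : 0 < 2 * W - areaSq (spatialGrad F P) := by linarith
  have hcurv := hF.curvature_le_of_eventually_testRatio_le (by linarith) hσ hpos
    (spatialHess_mulVec_of_testRatio_le hF.contDiffAt hpos (hmax.self_of_nhds le_rfl))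
    ((continuousAt_fst (p := (P, ξ))).eventually hmax |>.mono fun Y hY hle => hY hle Y.2)
  have hμ : (2 * W - areaSq (spatialGrad F P)) / areaSq (spatialGrad F P) ≤ 2 * W - 1 :=
    (div_le_self hm.le hw1).trans (by linarith)
  have hσR : cutoff x₀ R P ≤ R ^ 2 := sub_le_self _ (sq_nonneg _)
  have hσR2 : cutoff x₀ R P ^ 2 ≤ R ^ 4 := by
    simpa [← pow_mul] using pow_le_pow_left₀ hσ.le hσR 2
  calc 2 * testRatio F s₁ x₀ R W (P, ξ)
      = (P.1 - s₁) * cutoff x₀ R P ^ 2 * (2 * (hessForm F (P, ξ) / metricForm F (P, ξ)) ^ 2 /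
          (2 * W - areaSq (spatialGrad F P))) := by
        rw [testRatio_eq_mul_div_sq]
        ring
    _ ≤ (P.1 - s₁) * cutoff x₀ R P ^ 2 * (1 / (P.1 - s₁) +
          Fintype.card ι * ((8 * (2 * W - 1) + 28) * R ^ 2 / cutoff x₀ R P ^ 2)) := by
        gcongr
        exact hcurv.trans (by gcongr)
    _ = cutoff x₀ R P ^ 2 + Fintype.card ι * (16 * W + 20) * (P.1 - s₁) * R ^ 2 := by
        field_simp
        ring
    _ ≤ R ^ 4 + Fintype.card ι * (36 * W) * (P.1 - s₁) * R ^ 2 := by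
        gcongr
        linarith
    _ = R ^ 4 + 36 * Fintype.card ι * W * (P.1 - s₁) * R ^ 2 := by ring

end TestRatio

section Global

open Matrix

variable {ι : Type*} [Fintype ι] {s₁ s R W ρ : ℝ} {x₀ x : EuclideanSpace ℝ ι}
  {P : ℝ × EuclideanSpace ℝ ι}

theorem eventually_mem_of_cutoff_pos (hs₁ : s₁ < P.1) (hs : P.1 ≤ s) (hR : 0 ≤ R)
    (hσ : 0 < cutoff x₀ R P) :
    ∀ᶠ Q in 𝓝 P, Q.1 ≤ P.1 → Q ∈ Icc s₁ s ×ˢ closedBall x₀ R := by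
  have hball : P.2 ∈ ball x₀ R :=
    mem_ball_iff_norm.2 (lt_of_pow_lt_pow_left₀ 2 hR (sub_pos.1 hσ))
  filter_upwards [continuousAt_fst.eventually (lt_mem_nhds hs₁),
    continuousAt_snd.eventually (isOpen_ball.mem_nhds hball)] with Q hQ₁ hQ₂ hle
  exact ⟨⟨hQ₁.le, hle.trans hs⟩, ball_subset_closedBall hQ₂⟩

theorem le_cutoff_of_mem_ball (hx : x ∈ ball x₀ ρ) :
    5 / 4 * ρ ^ 2 ≤ cutoff x₀ (3 * ρ / 2) (s, x) := by
  have hxρ : ‖x - x₀‖ ^ 2 ≤ ρ ^ 2 := by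
    have := (mem_ball_iff_norm.1 hx).le
    gcongr
  rw [cutoff]
  linarith

variable [DecidableEq ι] {F : ℝ × EuclideanSpace ℝ ι → ℝ} {ξ : ι → ℝ}

theorem testRatio_smul {c : ℝ} (hc : c ≠ 0) :
    testRatio F s₁ x₀ R W (P, c • ξ) = testRatio F s₁ x₀ R W (P, ξ) := by
  simp only [testRatio_eq_mul_div_sq, hessForm, metricForm, mulVec_smul, smul_dotProduct,
    dotProduct_smul, smul_eq_mul, mul_div_mul_left _ _ hc]

theorem testRatio_le_of_forall_mem_sphere {M : ℝ} (hM : 0 ≤ M)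
    (h : ∀ y ∈ sphere (0 : ι → ℝ) 1, testRatio F s₁ x₀ R W (P, y) ≤ M) (ξ : ι → ℝ) :
    testRatio F s₁ x₀ R W (P, ξ) ≤ M := by
  obtain rfl | hξ := eq_or_ne ξ 0
  · simpa [testRatio, hessForm] using hM
  · rw [← testRatio_smul (inv_ne_zero (norm_ne_zero_iff.2 hξ))]
    exact h _ (by simp [norm_smul, hξ])

theorem testRatio_nonneg (hτ : s₁ ≤ P.1) (hw : areaSq (spatialGrad F P) ≤ W) :
    0 ≤ testRatio F s₁ x₀ R W (P, ξ) := by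
  have hm := one_le_areaSq (spatialGrad F P)
  rw [testRatio_eq_mul_div_sq]
  exact mul_nonneg (div_nonneg (mul_nonneg (sub_nonneg.2 hτ) (sq_nonneg _)) (by linarith))
    (sq_nonneg _)

theorem two_mul_testRatio_le (hF : ∀ Q ∈ Icc s₁ s ×ˢ closedBall x₀ R, IsMCFAt F Q)
    (hw : ∀ Q ∈ Icc s₁ s ×ˢ closedBall x₀ R, areaSq (spatialGrad F Q) ≤ W)
    (hP : P ∈ Icc s₁ s ×ˢ closedBall x₀ R) (hξ : ξ ≠ 0) :
    2 * testRatio F s₁ x₀ R W (P, ξ) ≤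
      R ^ 4 + 36 * Fintype.card ι * W * (s - s₁) * R ^ 2 := by
  have hW : 1 ≤ W := (one_le_areaSq _).trans (hw P hP)
  have hcont : ContinuousOn (testRatio F s₁ x₀ R W)
      ((Icc s₁ s ×ˢ closedBall x₀ R) ×ˢ sphere 0 1) := fun Y hY =>
    (continuousAt_testRatio (hF Y.1 hY.1).contDiffAt
      (by linarith [hw Y.1 hY.1])
      (metricForm_pos (ne_zero_of_mem_unit_sphere ⟨Y.2, hY.2⟩)).ne').continuousWithinAt
  obtain ⟨⟨Q, η⟩, ⟨hQ, -⟩, hmax⟩ :=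
    ((isCompact_Icc.prod (isCompact_closedBall x₀ R)).prod (isCompact_sphere 0 1)).exists_isMaxOn
      ⟨(P, ‖ξ‖⁻¹ • ξ), hP, by simp [norm_smul, hξ]⟩ hcont
  have hle (Q') (hQ' : Q' ∈ Icc s₁ s ×ˢ closedBall x₀ R) (y : ι → ℝ) :
      testRatio F s₁ x₀ R W (Q', y) ≤ testRatio F s₁ x₀ R W (Q, η) :=
    testRatio_le_of_forall_mem_sphere (testRatio_nonneg hQ.1.1 (hw Q hQ))
      (fun y hy => hmax ⟨hQ', hy⟩) y
  have hs : 0 ≤ s - s₁ := sub_nonneg.2 (hP.1.1.trans hP.1.2)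
  refine (mul_le_mul_of_nonneg_left (hle P hP ξ) two_pos.le).trans ?_
  by_cases hzero : testRatio F s₁ x₀ R W (Q, η) = 0
  · rw [hzero, mul_zero]
    positivity
  simp only [testRatio, div_ne_zero_iff, mul_ne_zero_iff, ne_eq, OfNat.ofNat_ne_zero,
    not_false_eq_true, pow_eq_zero_iff] at hzero
  obtain ⟨⟨⟨hτQ, hσQ⟩, -⟩, -⟩ := hzero
  have hτQ := (sub_nonneg.2 hQ.1.1).lt_of_ne' hτQ
  have hball : ‖Q.2 - x₀‖ ≤ R := mem_closedBall_iff_norm.1 hQ.2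
  have hR : 0 ≤ R := (norm_nonneg _).trans hball
  have hσQ : 0 < cutoff x₀ R Q := (sub_nonneg.2 (by gcongr)).lt_of_ne' hσQ
  refine ((hF Q hQ).two_mul_testRatio_le (hw Q hQ) hτQ hσQ
    ((eventually_mem_of_cutoff_pos (sub_pos.1 hτQ) hQ.1.2 hR hσQ).mono fun Q' hQ' hpast =>
      hle Q' (hQ' hpast))).trans ?_
  gcongr
  exact hQ.1.2

theorem le_inv_add_inv_of_mul_le {τ ρ W c k : ℝ} (hτ : 0 < τ) (hρ : 0 < ρ) (hW : 1 ≤ W)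
    (hc : 1 ≤ c) (h : 2 * (τ * (5 / 4 * ρ ^ 2) ^ 2 / (2 * W) * k) ≤
      (3 * ρ / 2) ^ 4 + 36 * c * W * τ * (3 * ρ / 2) ^ 2) :
    k ≤ 81 * c * (τ⁻¹ + (ρ ^ 2)⁻¹) * W ^ 2 := by
  calc k ≤ 81 / 25 * τ⁻¹ * W + 1296 / 25 * c * (ρ ^ 2)⁻¹ * W ^ 2 := by
        field_simp at h ⊢
        linarith
    _ ≤ 81 * 1 * τ⁻¹ * W ^ 2 + 81 * c * (ρ ^ 2)⁻¹ * W ^ 2 := by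
        gcongr <;> norm_num
        exact le_self_pow₀ hW two_ne_zero
    _ ≤ 81 * c * τ⁻¹ * W ^ 2 + 81 * c * (ρ ^ 2)⁻¹ * W ^ 2 := by gcongr
    _ = 81 * c * (τ⁻¹ + (ρ ^ 2)⁻¹) * W ^ 2 := by ring

theorem sq_hessForm_div_metricForm_le (hρ : 0 < ρ) (hs : s₁ < s)
    (hF : ∀ Q ∈ Icc s₁ s ×ˢ closedBall x₀ (3 * ρ / 2), IsMCFAt F Q)
    (hw : ∀ Q ∈ Icc s₁ s ×ˢ closedBall x₀ (3 * ρ / 2), areaSq (spatialGrad F Q) ≤ W)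
    (hx : x ∈ ball x₀ ρ) (hξ : ξ ≠ 0) :
    (hessForm F ((s, x), ξ) / metricForm F ((s, x), ξ)) ^ 2 ≤
      81 * Fintype.card ι * ((s - s₁)⁻¹ + (ρ ^ 2)⁻¹) * W ^ 2 := by
  have hmem : (s, x) ∈ Icc s₁ s ×ˢ closedBall x₀ (3 * ρ / 2) :=
    ⟨right_mem_Icc.2 hs.le, ball_subset_closedBall (ball_subset_ball (by linarith) hx)⟩
  have hτ : 0 < s - s₁ := sub_pos.2 hs
  have hw1 := one_le_areaSq (spatialGrad F (s, x))
  have hW : 1 ≤ W := hw1.trans (hw _ hmem)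
  have hm : 0 < 2 * W - areaSq (spatialGrad F (s, x)) := by linarith [hw _ hmem]
  have hcard : (1 : ℝ) ≤ Fintype.card ι := by
    obtain ⟨i, -⟩ := Function.ne_iff.1 hξ
    exact_mod_cast Fintype.card_pos_iff.2 ⟨i⟩
  have hσ : 5 / 4 * ρ ^ 2 ≤ cutoff x₀ (3 * ρ / 2) (s, x) := le_cutoff_of_mem_ball hx
  set κ := hessForm F ((s, x), ξ) / metricForm F ((s, x), ξ)
  have hlow : (s - s₁) * (5 / 4 * ρ ^ 2) ^ 2 / (2 * W) * κ ^ 2 ≤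
      testRatio F s₁ x₀ (3 * ρ / 2) W ((s, x), ξ) := by
    rw [testRatio_eq_mul_div_sq]
    gcongr
    linarith
  exact le_inv_add_inv_of_mul_le hτ hρ hW hcard
    ((mul_le_mul_of_nonneg_left hlow two_pos.le).trans (two_mul_testRatio_le hF hw hmem hξ))

theorem abs_hessForm_le (hρ : 0 < ρ) (hs : s₁ < s)
    (hF : ∀ Q ∈ Icc s₁ s ×ˢ closedBall x₀ (3 * ρ / 2), IsMCFAt F Q)
    (hw : ∀ Q ∈ Icc s₁ s ×ˢ closedBall x₀ (3 * ρ / 2), areaSq (spatialGrad F Q) ≤ W)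
    (hx : x ∈ ball x₀ ρ) (ξ : ι → ℝ) :
    |hessForm F ((s, x), ξ)| ≤ √(81 * Fintype.card ι * ((s - s₁)⁻¹ + (ρ ^ 2)⁻¹) * W ^ 2) *
      metricForm F ((s, x), ξ) := by
  obtain rfl | hξ := eq_or_ne ξ 0
  · simp [hessForm, metricForm]
  have hD := metricForm_pos (F := F) (P := (s, x)) hξ
  rw [← div_le_iff₀ hD]
  simpa only [abs_div, abs_of_pos hD] using
    Real.abs_le_sqrt (sq_hessForm_div_metricForm_le hρ hs hF hw hx hξ)

end Global

section Slices

open Matrix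

theorem IsTangentFrame.sum_sq_le {ι : Type*} [Fintype ι] [DecidableEq ι] {p : ι → ℝ}
    {S B : Matrix ι ι ℝ} (hB : IsTangentFrame p B) (hS : S.IsSymm) {Λ : ℝ}
    (h : ∀ y, |y ⬝ᵥ S *ᵥ y| ≤ Λ * (y ⬝ᵥ graphMetric p *ᵥ y)) :
    ∑ k, ∑ l, (B k ⬝ᵥ S *ᵥ B l) ^ 2 ≤ Fintype.card ι ^ 2 * Λ ^ 2 := by
  have hkl (k l : ι) : (B k ⬝ᵥ S *ᵥ B l) ^ 2 ≤ Λ ^ 2 := by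
    have := abs_dotProduct_mulVec_le hS (isSymm_graphMetric p) h (B k) (B l)
    rw [hB.dotProduct_graphMetric, hB.dotProduct_graphMetric, one_apply_eq, one_apply_eq] at this
    exact sq_le_sq' (by linarith [neg_abs_le (B k ⬝ᵥ S *ᵥ B l)])
      (by linarith [le_abs_self (B k ⬝ᵥ S *ᵥ B l)])
  refine (Finset.sum_le_sum fun k _ => Finset.sum_le_sum fun l _ => hkl k l).trans_eq ?_
  simp only [Finset.sum_const, Finset.card_univ, nsmul_eq_mul]
  ring

variable {n : ℕ}

section

variable {g : EuclideanSpace ℝ (Fin n) → ℝ} {x : EuclideanSpace ℝ (Fin n)}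

theorem one_add_gradNormSq : 1 + gradNormSq g x = areaSq (pd g x) := by
  simp only [gradNormSq, areaSq, dotProduct, sq]

theorem inv_graphMetric_pd_apply (i k : Fin n) : (graphMetric (pd g x))⁻¹ i k =
    (if i = k then (1 : ℝ) else 0) - pd g x i * pd g x k / (1 + gradNormSq g x) := by
  rw [inv_graphMetric, one_add_gradNormSq, Matrix.sub_apply, one_apply, Matrix.smul_apply,
    vecMulVec_apply, smul_eq_mul, inv_mul_eq_div]

theorem secondFF2_eq : secondFF2 g x = (∑ i, ∑ j, ∑ k, ∑ l, (graphMetric (pd g x))⁻¹ i k *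
    (graphMetric (pd g x))⁻¹ j l * Matrix.of (pd2 g x) i j * Matrix.of (pd2 g x) k l) /
      areaSq (pd g x) := by
  simp only [secondFF2, ← inv_graphMetric_pd_apply, Finset.sum_div]
  refine Finset.sum_congr rfl fun i _ => Finset.sum_congr rfl fun j _ =>
    Finset.sum_congr rfl fun k _ => Finset.sum_congr rfl fun l _ => ?_
  rw [one_add_gradNormSq, mul_assoc, div_mul_div_comm, Real.mul_self_sqrt (areaSq_pos _).le,
    ← mul_div_assoc, ← mul_assoc]
  rfl

theorem mcfRHS_eq : mcfRHS g x = mcfOperator (pd g x) (Matrix.of (pd2 g x)) := by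
  simp only [mcfRHS, mcfOperator, one_add_gradNormSq, sub_mul, Finset.sum_sub_distrib, ite_mul,
    one_mul, zero_mul, Finset.sum_ite_eq, Finset.mem_univ, if_true, trace, diag_apply, of_apply,
    dotProduct, mulVec, Finset.mul_sum, Finset.sum_div]
  congr 1
  exact Finset.sum_congr rfl fun i _ => Finset.sum_congr rfl fun j _ => by ring

theorem secondFF2_le_of_abs_le (hS : (Matrix.of (pd2 g x)).IsSymm) {Λ : ℝ}
    (h : ∀ y, |y ⬝ᵥ Matrix.of (pd2 g x) *ᵥ y| ≤ Λ * (y ⬝ᵥ graphMetric (pd g x) *ᵥ y)) :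
    secondFF2 g x ≤ n ^ 2 * Λ ^ 2 := by
  obtain ⟨B, hB⟩ := exists_isTangentFrame (pd g x)
  rw [secondFF2_eq, hB.sum_inv_graphMetric]
  refine (div_le_self (by positivity) (one_le_areaSq _)).trans ?_
  simpa using hB.sum_sq_le hS h

end

variable {F : ℝ × EuclideanSpace ℝ (Fin n) → ℝ} {t : ℝ} {x : EuclideanSpace ℝ (Fin n)}

theorem fderiv_slice (hF : DifferentiableAt ℝ F (t, x)) (i : Fin n) :
    fderiv ℝ (fun y => F (t, y)) x (EuclideanSpace.single i 1) =
      dirDeriv (spatial (Pi.single i 1)) F (t, x) := by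
  have h := hF.hasFDerivAt.comp x (hasFDerivAt_prodMk_right (𝕜 := ℝ) t x)
  exact DFunLike.congr_fun h.fderiv _

theorem pd_slice (hF : DifferentiableAt ℝ F (t, x)) :
    pd (fun y => F (t, y)) x = spatialGrad F (t, x) :=
  funext fun i => fderiv_slice hF i

theorem pd2_slice (hF : ContDiffAt ℝ ∞ F (t, x)) :
    Matrix.of (pd2 (fun y => F (t, y)) x) = spatialHess F (t, x) := by
  ext i j
  have hpd : (fun y => pd (fun y => F (t, y)) y j) =ᶠ[𝓝 x]
      fun y => dirDeriv (spatial (Pi.single j 1)) F (t, y) := by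
    have hdiff : ∀ᶠ Q in 𝓝 (t, x), DifferentiableAt ℝ F Q :=
      ((hF.of_le (m := 1) (by simp)).eventually (by simp)).mono fun Q hQ =>
        hQ.differentiableAt one_ne_zero
    filter_upwards [(Continuous.prodMk_right t).continuousAt.eventually hdiff] with y hy
    exact fderiv_slice hy j
  rw [of_apply, pd2, hpd.fderiv_eq]
  exact fderiv_slice ((contDiffAt_dirDeriv hF _).differentiableAt (by simp)) i

theorem deriv_slice (hF : DifferentiableAt ℝ F (t, x)) :
    deriv (fun s => F (s, x)) t = dirDeriv timeDir F (t, x) := by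
  have h := hF.hasFDerivAt.comp t (hasFDerivAt_prodMk_left (𝕜 := ℝ) t x)
  simpa [timeDir, dirDeriv, Function.comp_def] using h.hasDerivAt.deriv

theorem IsGMCF.isMCFAt {I : Set ℝ} {U : Set (EuclideanSpace ℝ (Fin n))}
    {f : ℝ → EuclideanSpace ℝ (Fin n) → ℝ} (hf : IsGMCF I U f) (hI : IsOpen I) (hU : IsOpen U)
    {P : ℝ × EuclideanSpace ℝ (Fin n)} (hP : P ∈ I ×ˢ U) :
    IsMCFAt (fun Q => f Q.1 Q.2) P := by
  have hIU : IsOpen (I ×ˢ U) := hI.prod hU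
  have hsmooth (Q) (hQ : Q ∈ I ×ˢ U) : ContDiffAt ℝ ∞ (fun Q => f Q.1 Q.2) Q :=
    hf.1.contDiffAt (hIU.mem_nhds hQ)
  refine ⟨hsmooth P hP, ?_⟩
  filter_upwards [hIU.mem_nhds hP] with Q hQ
  have hdiff : DifferentiableAt ℝ (fun Q => f Q.1 Q.2) Q :=
    (hsmooth Q hQ).differentiableAt (by simp)
  rw [← pd_slice hdiff, ← pd2_slice (hsmooth Q hQ), ← mcfRHS_eq, ← deriv_slice hdiff]
  exact hf.2 Q.1 hQ.1 Q.2 hQ.2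

theorem IsGMCF.secondFF2_le {I : Set ℝ} {U : Set (EuclideanSpace ℝ (Fin n))}
    {f : ℝ → EuclideanSpace ℝ (Fin n) → ℝ} {s₁ s ρ K : ℝ} {x₀ : EuclideanSpace ℝ (Fin n)}
    (hf : IsGMCF I U f) (hI : IsOpen I) (hU : IsOpen U) (hs : s₁ < s) (hsI : Icc s₁ s ⊆ I)
    (hρ : 0 < ρ) (hρU : closedBall x₀ (3 * ρ / 2) ⊆ U)
    (hK : ∀ t ∈ Icc s₁ s, ∀ y ∈ closedBall x₀ (3 * ρ / 2), (1 + gradNormSq (f t) y) ^ 2 ≤ K)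
    (hx : x ∈ ball x₀ ρ) :
    secondFF2 (f s) x ≤ 81 * n ^ 3 * ((s - s₁)⁻¹ + (ρ ^ 2)⁻¹) * K := by
  have hmcf (Q) (hQ : Q ∈ Icc s₁ s ×ˢ closedBall x₀ (3 * ρ / 2)) :
      IsMCFAt (fun P => f P.1 P.2) Q :=
    hf.isMCFAt hI hU ⟨hsI hQ.1, hρU hQ.2⟩
  have hgrad (Q) (hQ : Q ∈ Icc s₁ s ×ˢ closedBall x₀ (3 * ρ / 2)) :
      areaSq (spatialGrad (fun P => f P.1 P.2) Q) ≤ √K := by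
    rw [← pd_slice ((hmcf Q hQ).contDiffAt.differentiableAt (by simp)), ← one_add_gradNormSq]
    exact Real.le_sqrt_of_sq_le (hK Q.1 hQ.1 Q.2 hQ.2)
  have hs_mem : s ∈ Icc s₁ s := right_mem_Icc.2 hs.le
  have hx_mem : x ∈ closedBall x₀ (3 * ρ / 2) :=
    ball_subset_closedBall (ball_subset_ball (by linarith) hx)
  have hsmooth := (hmcf (s, x) ⟨hs_mem, hx_mem⟩).contDiffAt
  have hcurv := abs_hessForm_le hρ hs hmcf hgrad hx
  simp only [hessForm, metricForm, ← pd2_slice hsmooth,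
    ← pd_slice (hsmooth.differentiableAt (by simp))] at hcurv
  have hτ : 0 ≤ (s - s₁)⁻¹ := inv_nonneg.2 (sub_nonneg.2 hs.le)
  have hK₀ : 0 ≤ K := (sq_nonneg _).trans (hK s hs_mem x hx_mem)
  refine (secondFF2_le_of_abs_le (pd2_slice hsmooth ▸ isSymm_spatialHess hsmooth) hcurv).trans_eq ?_
  rw [Real.sq_sqrt (mul_nonneg (mul_nonneg (by positivity) (add_nonneg hτ (by positivity)))
    (sq_nonneg _)), Real.sq_sqrt hK₀, Fintype.card_fin]
  ring

end Slices

/-- **Ecker–Huisken local curvature estimate** (graphical form).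
There exists `C > 1` (depending only on `n`) such that for any graphical mean curvature
flow on `(t₁,t₂) × Bⁿ(x̂₀,2ρ)` (with `t₂ ∈ (t₁,∞]`), any `s₁ ∈ (t₁,t₂)`, `s ∈ (s₁,t₂)`,
and any finite bound `K` of `sup_{t∈[s₁,s]} sup_{Bⁿ(x̂₀,2ρ)} (1+|Df(t,·)|²)²`, one has
`|A|²(f(s,·),x) ≤ C((s−s₁)⁻¹ + ρ⁻²)·K` for all `x ∈ Bⁿ(x̂₀,ρ)`. -/
theorem localcurvethm (n : ℕ) (hn : 1 ≤ n) :
    ∃ C : ℝ, 1 < C ∧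
      ∀ (ρ : ℝ), 0 < ρ → ∀ (t₁ : ℝ) (t₂ : EReal), (t₁ : EReal) < t₂ →
        ∀ (x₀ : EuclideanSpace ℝ (Fin n)) (f : ℝ → EuclideanSpace ℝ (Fin n) → ℝ),
          IsGMCF {t : ℝ | t₁ < t ∧ (t : EReal) < t₂} (Metric.ball x₀ (2 * ρ)) f →
          ∀ s₁ : ℝ, t₁ < s₁ → (s₁ : EReal) < t₂ →
          ∀ s : ℝ, s₁ < s → (s : EReal) < t₂ →
          ∀ K : ℝ,
            (∀ t ∈ Set.Icc s₁ s, ∀ y ∈ Metric.ball x₀ (2 * ρ),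
              (1 + gradNormSq (f t) y) ^ 2 ≤ K) →
            ∀ x ∈ Metric.ball x₀ ρ,
              secondFF2 (f s) x ≤ C * ((s - s₁)⁻¹ + (ρ ^ 2)⁻¹) * K := by
  have hn' : (1 : ℝ) ≤ n := by exact_mod_cast hn
  refine ⟨81 * n ^ 3, by linarith [one_le_pow₀ hn' (n := 3)],
    fun ρ hρ t₁ t₂ _ x₀ f hf s₁ hs₁ _ s hs hs₂ K hK x hx => ?_⟩
  have hI : IsOpen {t : ℝ | t₁ < t ∧ (t : EReal) < t₂} :=
    isOpen_Ioi.inter (isOpen_Iio.preimage continuous_coe_real_ereal)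
  have hsI : Icc s₁ s ⊆ {t : ℝ | t₁ < t ∧ (t : EReal) < t₂} := fun t ht =>
    ⟨hs₁.trans_le ht.1, (EReal.coe_le_coe_iff.2 ht.2).trans_lt hs₂⟩
  have hball : closedBall x₀ (3 * ρ / 2) ⊆ ball x₀ (2 * ρ) :=
    closedBall_subset_ball (by linarith)
  exact hf.secondFF2_le hI isOpen_ball hs hsI hρ hball (fun t ht y hy => hK t ht y (hball hy)) hx
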